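/- arXiv:math/0703164 — 7 statements merged into one kernel-verified Lean document; each statement's English description precedes it below -/
import Mathlib

section
/- Let f(x) = (τ/2)·x² + σ·x + κ be a real quadratic polynomial with τ ≠ 0, and let d_f : 𝒮 → 𝒮 be the twisted differential d_f(α) = α′ − f′·α. If τ < 0, then the kernel of d_f is the one-dimensional subspace ℝ·e^f (the Gaussian e^f lies in 𝒮) and d_f is surjective. If τ > 0, then d_f is injective and its range is exactly {β ∈ 𝒮 : ∫_ℝ e^{−f(t)}·β(t) dt = 0}, so the quotient 𝒮 / range(d_f) is one-dimensional. Hence the two-term complex 0 → 𝒮 →^{d_f} 𝒮 → 0 has one-dimensional total cohomology, concentrated in degree 0 when τ < 0 and in degree 1 when τ > 0. -/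
open MeasureTheory

open Filter Topology SchwartzMap

/-- The weight `(1 + x²)^k` has logarithmic derivative `2kx / (1 + x²)`. -/
lemma hasDerivAt_one_add_sq_pow (k : ℕ) (x : ℝ) :
    HasDerivAt (fun y : ℝ => (1 + y ^ 2) ^ k)
      (2 * k * x / (1 + x ^ 2) * (1 + x ^ 2) ^ k) x := by
  have h : (1 + x ^ 2 : ℝ) ≠ 0 := by positivity
  refine (((hasDerivAt_pow 2 x).const_add 1).pow k).congr_deriv ?_
  cases k with
  | zero => simp
  | succ k =>
    rw [pow_succ, Nat.add_sub_cancel]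
    field_simp
    push_cast
    ring

lemma abs_two_mul_div_one_add_sq_le (k : ℕ) (x : ℝ) :
    |2 * (k : ℝ) * x / (1 + x ^ 2)| ≤ (k : ℝ) := by
  have hk : (0 : ℝ) ≤ k := k.cast_nonneg
  rw [abs_div, abs_of_pos (by positivity : (0 : ℝ) < 1 + x ^ 2), div_le_iff₀ (by positivity),
    abs_mul, abs_of_nonneg (by positivity : (0 : ℝ) ≤ 2 * k)]
  nlinarith [mul_nonneg hk (sq_nonneg (|x| - 1)), sq_abs x]

lemma SchwartzMap.exists_one_add_sq_pow_mul_abs_le (β : SchwartzMap ℝ ℝ) (k : ℕ) :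
    ∃ M, ∀ x, (1 + x ^ 2) ^ k * |β x| ≤ M := by
  have hg : (fun x : ℝ => (1 + x ^ 2) ^ k).HasTemperateGrowth := by fun_prop
  refine ⟨_, fun x => le_trans (le_of_eq ?_)
    (norm_le_seminorm ℝ (smulLeftCLM ℝ (fun x : ℝ => (1 + x ^ 2) ^ k) β) x)⟩
  rw [smulLeftCLM_apply_apply hg, smul_eq_mul, Real.norm_eq_abs, abs_mul,
    abs_of_nonneg (by positivity : (0 : ℝ) ≤ (1 + x ^ 2) ^ k)]

lemma exists_polynomial_mul_abs_le {α : ℝ → ℝ}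
    (hα : ∀ k : ℕ, ∃ C, ∀ x, (1 + x ^ 2) ^ k * |α x| ≤ C) (P : Polynomial ℝ) :
    ∃ C, ∀ x, |P.eval x| * |α x| ≤ C := by
  have hP : (fun x : ℝ => P.eval x).HasTemperateGrowth := by
    simp only [Polynomial.eval_eq_sum_range]
    fun_prop
  obtain ⟨m, C, hC⟩ := hP.2 0
  obtain ⟨D, hD⟩ := hα m
  have hC0 : 0 ≤ C := by
    have := (norm_nonneg _).trans (hC 0)
    simpa using this
  refine ⟨C * 2 ^ m * D, fun x => ?_⟩
  have hx : |P.eval x| ≤ C * (1 + |x|) ^ m := by simpa using hC x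
  have hw : (1 + |x|) ^ m ≤ 2 ^ m * (1 + x ^ 2) ^ m := by
    rw [← mul_pow]
    gcongr
    nlinarith [sq_nonneg (|x| - 1), sq_abs x]
  calc |P.eval x| * |α x| ≤ C * (2 ^ m * (1 + x ^ 2) ^ m) * |α x| := by
        gcongr
        exact hx.trans (by gcongr)
    _ = C * 2 ^ m * ((1 + x ^ 2) ^ m * |α x|) := by ring
    _ ≤ C * 2 ^ m * D := by gcongr; exact hD x

/-- Along a solution of `α′ = (τx + σ)α + β`, every derivative of `α` is a polynomial multiple
of `α` plus a Schwartz function. -/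
lemma exists_iteratedDeriv_eq_polynomial_mul_add {τ σ : ℝ} {α : ℝ → ℝ} {β : SchwartzMap ℝ ℝ}
    (hα : ∀ x, HasDerivAt α ((τ * x + σ) * α x + β x) x) (n : ℕ) :
    ∃ (P : Polynomial ℝ) (S : SchwartzMap ℝ ℝ),
      iteratedDeriv n α = fun x => P.eval x * α x + S x := by
  induction n with
  | zero => exact ⟨1, 0, by ext x; simp⟩
  | succ n ih =>
    obtain ⟨P, S, h⟩ := ih
    have hP : (fun x : ℝ => P.eval x).HasTemperateGrowth := by
      simp only [Polynomial.eval_eq_sum_range]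
      fun_prop
    refine ⟨P.derivative + P * (Polynomial.C τ * Polynomial.X + Polynomial.C σ),
      smulLeftCLM ℝ (fun x : ℝ => P.eval x) β + derivCLM ℝ ℝ S, ?_⟩
    ext x
    rw [iteratedDeriv_succ, h, (((P.hasDerivAt x).fun_mul (hα x)).fun_add (S.hasDerivAt x)).deriv]
    simp [smulLeftCLM_apply_apply hP]
    ring

/-- A rapidly decreasing solution of `α′ = (τx + σ)α + β` with `β` Schwartz is Schwartz. -/
lemma exists_schwartzMap_eq_of_hasDerivAt {τ σ : ℝ} {α : ℝ → ℝ} {β : SchwartzMap ℝ ℝ}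
    (hα : ∀ x, HasDerivAt α ((τ * x + σ) * α x + β x) x)
    (hdecay : ∀ k : ℕ, ∃ C, ∀ x, (1 + x ^ 2) ^ k * |α x| ≤ C) :
    ∃ g : SchwartzMap ℝ ℝ, ∀ x, g x = α x := by
  refine ⟨⟨α, contDiff_of_differentiable_iteratedDeriv fun n _ => ?_, fun k n => ?_⟩,
    fun x => rfl⟩
  · obtain ⟨P, S, h⟩ := exists_iteratedDeriv_eq_polynomial_mul_add hα n
    rw [h]
    exact fun x =>
      (((P.hasDerivAt x).mul (hα x)).add (S.hasDerivAt x)).differentiableAt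
  · obtain ⟨P, S, h⟩ := exists_iteratedDeriv_eq_polynomial_mul_add hα n
    obtain ⟨C, hC⟩ := exists_polynomial_mul_abs_le hdecay (Polynomial.X ^ k * P)
    obtain ⟨D, hD⟩ := exists_polynomial_mul_abs_le
      S.exists_one_add_sq_pow_mul_abs_le (Polynomial.X ^ k)
    refine ⟨C + D, fun x => ?_⟩
    rw [norm_iteratedFDeriv_eq_norm_iteratedDeriv, h]
    have hCx := hC x
    have hDx := hD x
    simp only [Polynomial.eval_mul, Polynomial.eval_pow, Polynomial.eval_X, abs_mul, abs_pow]
      at hCx hDx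
    calc ‖x‖ ^ k * ‖P.eval x * α x + S x‖
        ≤ |x| ^ k * (|P.eval x| * |α x| + |S x|) := by
          rw [Real.norm_eq_abs, Real.norm_eq_abs, ← abs_mul]
          gcongr
          exact abs_add_le _ _
      _ = |x| ^ k * |P.eval x| * |α x| + |x| ^ k * |S x| := by ring
      _ ≤ C + D := add_le_add hCx hDx

lemma exists_forall_abs_le_of_halfLine_bounds {u : ℝ → ℝ}
    (h₁ : ∃ C, ∀ x, 0 ≤ x → u x ≤ C) (h₂ : ∃ C, ∀ x, 0 ≤ x → -u x ≤ C)
    (h₃ : ∃ C, ∀ x, 0 ≤ x → u (-x) ≤ C) (h₄ : ∃ C, ∀ x, 0 ≤ x → -u (-x) ≤ C) :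
    ∃ C, ∀ x, |u x| ≤ C := by
  obtain ⟨C₁, h₁⟩ := h₁
  obtain ⟨C₂, h₂⟩ := h₂
  obtain ⟨C₃, h₃⟩ := h₃
  obtain ⟨C₄, h₄⟩ := h₄
  refine ⟨max (max C₁ C₂) (max C₃ C₄), fun x => ?_⟩
  rcases le_total 0 x with hx | hx
  · exact (abs_le'.2 ⟨(h₁ x hx).trans (le_max_left _ _), (h₂ x hx).trans (le_max_right _ _)⟩).trans
      (le_max_left _ _)
  · have hx' : 0 ≤ -x := by linarith
    have h₃ := h₃ (-x) hx'
    have h₄ := h₄ (-x) hx'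
    rw [neg_neg] at h₃ h₄
    exact (abs_le'.2 ⟨h₃.trans (le_max_left _ _), h₄.trans (le_max_right _ _)⟩).trans
      (le_max_right _ _)

lemma exists_le_on_Ici_of_le_on_Ici {u : ℝ → ℝ} (hu : Continuous u) {a C : ℝ}
    (h : ∀ x, a ≤ x → u x ≤ C) : ∃ D, ∀ x, 0 ≤ x → u x ≤ D := by
  obtain ⟨D, hD⟩ := (isCompact_Icc (a := (0 : ℝ)) (b := a)).bddAbove_image hu.continuousOn
  refine ⟨max C D, fun x hx => ?_⟩
  rcases le_total a x with hax | hax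
  · exact (h x hax).trans (le_max_left _ _)
  · exact (hD ⟨x, ⟨hx, hax⟩, rfl⟩).trans (le_max_right _ _)

/-- Maximum principle: for `τ < 0` the weighted solution cannot cross a large constant upwards. -/
lemma exists_weighted_le_of_neg {τ σ M : ℝ} (hτ : τ < 0) {α β : ℝ → ℝ} (k : ℕ)
    (hα : ∀ x, HasDerivAt α ((τ * x + σ) * α x + β x) x)
    (hβ : ∀ x, (1 + x ^ 2) ^ k * |β x| ≤ M) :
    ∃ C, ∀ x, 0 ≤ x → (1 + x ^ 2) ^ k * α x ≤ C := by
  have hu : ∀ x, HasDerivAt (fun y => (1 + y ^ 2) ^ k * α y)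
      ((2 * k * x / (1 + x ^ 2) + (τ * x + σ)) * ((1 + x ^ 2) ^ k * α x)
        + (1 + x ^ 2) ^ k * β x) x := fun x =>
    ((hasDerivAt_one_add_sq_pow k x).mul (hα x)).congr_deriv (by ring)
  have hcont : Continuous fun y => (1 + y ^ 2) ^ k * α y :=
    continuous_iff_continuousAt.2 fun x => (hu x).continuousAt
  have hM : 0 ≤ M := le_trans (by positivity) (hβ 0)
  set a := (1 + σ + k) / (-τ)
  set B := max ((1 + a ^ 2) ^ k * α a) (M + 1)
  have hMB : M + 1 ≤ B := le_max_right _ _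
  refine exists_le_on_Ici_of_le_on_Ici hcont (a := a) (C := B) fun x hx => ?_
  refine image_le_of_deriv_right_lt_deriv_boundary (B := fun _ => B) (B' := fun _ => 0)
    hcont.continuousOn (fun y _ => (hu y).hasDerivWithinAt) (le_max_left _ _)
    (fun y => hasDerivAt_const y B) (fun y hy hyB => ?_) (Set.right_mem_Icc.2 hx)
  rw [hyB]
  have hp : τ * y + σ + k ≤ -1 := by
    have := (div_le_iff₀ (neg_pos.2 hτ)).1 hy.1
    linarith
  have hq := (abs_le.1 (abs_two_mul_div_one_add_sq_le k y)).2
  have hβy : (1 + y ^ 2) ^ k * β y ≤ M :=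
    le_trans (by gcongr; exact le_abs_self _) (hβ y)
  nlinarith

/-- For `τ < 0`, all solutions of `α′ = (τx + σ)α + β` with `β` Schwartz are Schwartz. -/
lemma exists_schwartzMap_eq_of_neg {τ σ : ℝ} (hτ : τ < 0) {α : ℝ → ℝ} {β : SchwartzMap ℝ ℝ}
    (hα : ∀ x, HasDerivAt α ((τ * x + σ) * α x + β x) x) :
    ∃ g : SchwartzMap ℝ ℝ, ∀ x, g x = α x := by
  refine exists_schwartzMap_eq_of_hasDerivAt hα fun k => ?_
  obtain ⟨M, hM⟩ := β.exists_one_add_sq_pow_mul_abs_le k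
  have hr : ∀ x, HasDerivAt (fun y => α (-y)) ((τ * x + -σ) * α (-x) + -β (-x)) x := fun x =>
    ((hα (-x)).comp x (hasDerivAt_neg x)).congr_deriv (by ring)
  have hMr : ∀ x, (1 + x ^ 2) ^ k * |-β (-x)| ≤ M := fun x => by simpa using hM (-x)
  have hb := exists_forall_abs_le_of_halfLine_bounds (u := fun x => (1 + x ^ 2) ^ k * α x)
    (exists_weighted_le_of_neg hτ k hα hM)
    (by
      simpa using exists_weighted_le_of_neg (α := fun x => -α x) (σ := σ) (β := fun x => -β x) hτ k
        (fun x => (hα x).neg.congr_deriv (by ring)) (by simpa using hM))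
    (by simpa using exists_weighted_le_of_neg hτ k hr hMr)
    (by
      simpa using exists_weighted_le_of_neg (α := fun x => -α (-x)) (σ := -σ) (β := fun x => β (-x)) hτ k
        (fun x => (hr x).neg.congr_deriv (by ring)) (by simpa using hMr))
  obtain ⟨C, hC⟩ := hb
  refine ⟨C, fun x => ?_⟩
  rw [← abs_of_nonneg (by positivity : (0 : ℝ) ≤ (1 + x ^ 2) ^ k), ← abs_mul]
  exact hC x

/-- For `τ > 0`, comparing `e^{-F} α` with `M e^{-F} / (1 + x²)^k`, both vanishing at infinity. -/
lemma exists_weighted_le_of_pos {τ σ M : ℝ} (hτ : 0 < τ) {F α β : ℝ → ℝ} (k : ℕ)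
    (hF : ∀ x, HasDerivAt F (τ * x + σ) x)
    (hα : ∀ x, HasDerivAt α ((τ * x + σ) * α x + β x) x)
    (hβ : ∀ x, (1 + x ^ 2) ^ k * |β x| ≤ M)
    (hexp : Tendsto (fun x => Real.exp (-F x)) atTop (𝓝 0))
    (hlim : Tendsto (fun x => Real.exp (-F x) * α x) atTop (𝓝 0)) :
    ∃ C, ∀ x, 0 ≤ x → (1 + x ^ 2) ^ k * α x ≤ C := by
  have hcont : Continuous α := continuous_iff_continuousAt.2 fun x => (hα x).continuousAt
  have hM : 0 ≤ M := le_trans (by positivity) (hβ 0)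
  have hD : ∀ x, HasDerivAt (fun y => Real.exp (-F y) * (M / (1 + y ^ 2) ^ k - α y))
      (-(Real.exp (-F x) * (((τ * x + σ + 2 * k * x / (1 + x ^ 2)) * M
        + (1 + x ^ 2) ^ k * β x) / (1 + x ^ 2) ^ k))) x := fun x => by
    have hw : ((1 + x ^ 2) ^ k : ℝ) ≠ 0 := by positivity
    have hx : (1 + x ^ 2 : ℝ) ≠ 0 := by positivity
    refine ((hF x).neg.exp.mul
      (((hasDerivAt_const x M).div (hasDerivAt_one_add_sq_pow k x) hw).sub (hα x))).congr_deriv ?_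
    simp only [Pi.sub_apply, Pi.div_apply, Pi.neg_apply]
    field_simp
    ring
  set a := (1 - σ + k) / τ
  refine exists_le_on_Ici_of_le_on_Ici (u := fun x => (1 + x ^ 2) ^ k * α x) (by fun_prop)
    (a := a) (C := M) fun x hx => ?_
  have hanti : AntitoneOn (fun y => Real.exp (-F y) * (M / (1 + y ^ 2) ^ k - α y))
      (Set.Ici a) := by
    refine antitoneOn_of_deriv_nonpos (convex_Ici a)
      (fun y _ => (hD y).continuousAt.continuousWithinAt)
      (fun y _ => (hD y).differentiableAt.differentiableWithinAt) fun y hy => ?_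
    rw [(hD y).deriv]
    rw [interior_Ici] at hy
    have hp : 1 ≤ τ * y + σ - k := by
      have := (div_le_iff₀ hτ).1 (le_of_lt hy)
      linarith
    have hq := (abs_le.1 (abs_two_mul_div_one_add_sq_le k y)).1
    have hβy : -M ≤ (1 + y ^ 2) ^ k * β y := by
      have : (1 + y ^ 2) ^ k * -β y ≤ M :=
        le_trans (by gcongr; exact neg_le_abs _) (hβ y)
      linarith
    have hnum : 0 ≤ (τ * y + σ + 2 * k * y / (1 + y ^ 2)) * M + (1 + y ^ 2) ^ k * β y := by
      nlinarith
    exact neg_nonpos.2 (by positivity)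
  have hbdd : Tendsto (fun y : ℝ => Real.exp (-F y) * (M / (1 + y ^ 2) ^ k)) atTop (𝓝 0) := by
    refine squeeze_zero (fun y => by positivity) (fun y => ?_) (by simpa using hexp.mul_const M)
    gcongr
    exact div_le_self hM (one_le_pow₀ (by nlinarith [sq_nonneg y]))
  have htend : Tendsto (fun y => Real.exp (-F y) * (M / (1 + y ^ 2) ^ k - α y)) atTop (𝓝 0) := by
    simpa [mul_sub] using hbdd.sub hlim
  have hnonneg := le_of_tendsto htend (by
    filter_upwards [eventually_ge_atTop x] with y hy
    exact hanti hx (Set.mem_Ici.2 (le_trans hx hy)) hy)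
  have := nonneg_of_mul_nonneg_right hnonneg (Real.exp_pos _)
  rw [sub_nonneg, le_div_iff₀ (by positivity)] at this
  linarith

/-- For `τ > 0`, a solution of `α′ = (τx + σ)α + β` with `β` Schwartz is Schwartz as soon as
`e^{-F} α` vanishes at both ends. -/
lemma exists_schwartzMap_eq_of_pos {τ σ : ℝ} (hτ : 0 < τ) {F α : ℝ → ℝ} {β φ : SchwartzMap ℝ ℝ}
    (hF : ∀ x, HasDerivAt F (τ * x + σ) x) (hφ : ∀ x, φ x = Real.exp (-F x))
    (hα : ∀ x, HasDerivAt α ((τ * x + σ) * α x + β x) x)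
    (htop : Tendsto (fun x => Real.exp (-F x) * α x) atTop (𝓝 0))
    (hbot : Tendsto (fun x => Real.exp (-F x) * α x) atBot (𝓝 0)) :
    ∃ g : SchwartzMap ℝ ℝ, ∀ x, g x = α x := by
  refine exists_schwartzMap_eq_of_hasDerivAt hα fun k => ?_
  obtain ⟨M, hM⟩ := β.exists_one_add_sq_pow_mul_abs_le k
  have hexp : Tendsto (fun x => Real.exp (-F x)) (cocompact ℝ) (𝓝 0) := by
    simpa only [funext hφ] using φ.tendsto_cocompact
  have hexp_top := hexp.mono_left atTop_le_cocompact
  have hexp_bot := (hexp.mono_left atBot_le_cocompact).comp tendsto_neg_atTop_atBot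
  have hbot' := hbot.comp tendsto_neg_atTop_atBot
  have hFr : ∀ x, HasDerivAt (fun y => F (-y)) (τ * x + -σ) x := fun x =>
    ((hF (-x)).comp x (hasDerivAt_neg x)).congr_deriv (by ring)
  have hr : ∀ x, HasDerivAt (fun y => α (-y)) ((τ * x + -σ) * α (-x) + -β (-x)) x := fun x =>
    ((hα (-x)).comp x (hasDerivAt_neg x)).congr_deriv (by ring)
  have hMr : ∀ x, (1 + x ^ 2) ^ k * |-β (-x)| ≤ M := fun x => by simpa using hM (-x)
  have hb := exists_forall_abs_le_of_halfLine_bounds (u := fun x => (1 + x ^ 2) ^ k * α x)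
    (exists_weighted_le_of_pos hτ k hF hα hM hexp_top htop)
    (by
      simpa using exists_weighted_le_of_pos (α := fun x => -α x) (σ := σ) (β := fun x => -β x) hτ k hF
        (fun x => (hα x).neg.congr_deriv (by ring)) (by simpa using hM) hexp_top
        (by simpa using htop.neg))
    (by simpa using exists_weighted_le_of_pos hτ k hFr hr hMr hexp_bot hbot')
    (by
      simpa using exists_weighted_le_of_pos (α := fun x => -α (-x)) (σ := -σ) (β := fun x => β (-x)) hτ k
        hFr (fun x => (hr x).neg.congr_deriv (by ring)) (by simpa using hMr) hexp_bot
        (by simpa [Function.comp_def] using hbot'.neg))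
  obtain ⟨C, hC⟩ := hb
  refine ⟨C, fun x => ?_⟩
  rw [← abs_of_nonneg (by positivity : (0 : ℝ) ≤ (1 + x ^ 2) ^ k), ← abs_mul]
  exact hC x

/-- The Gaussian `e^F` is Schwartz when `F′ = τx + σ` with `τ < 0`. -/
lemma exists_schwartzMap_eq_exp {τ σ : ℝ} (hτ : τ < 0) {F : ℝ → ℝ}
    (hF : ∀ x, HasDerivAt F (τ * x + σ) x) :
    ∃ g : SchwartzMap ℝ ℝ, ∀ x, g x = Real.exp (F x) :=
  exists_schwartzMap_eq_of_neg (σ := σ) (β := 0) hτ fun x => (hF x).exp.congr_deriv (by simp [mul_comm])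

/-- The integrating factor: `(e^{-F} α)′ = e^{-F} (α′ - F′ α)`. -/
lemma hasDerivAt_exp_neg_mul {p : ℝ} {F α : ℝ → ℝ} {α' x : ℝ} (hF : HasDerivAt F p x)
    (hα : HasDerivAt α α' x) :
    HasDerivAt (fun y => Real.exp (-F y) * α y) (Real.exp (-F x) * (α' - p * α x)) x :=
  (hF.neg.exp.mul hα).congr_deriv (by simp only [Pi.neg_apply]; ring)

/-- Variation of constants. -/
lemma hasDerivAt_exp_mul_of_hasDerivAt {p b : ℝ} {F h : ℝ → ℝ} {x : ℝ} (hF : HasDerivAt F p x)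
    (hh : HasDerivAt h (Real.exp (-F x) * b) x) :
    HasDerivAt (fun y => Real.exp (F y) * h y) (p * (Real.exp (F x) * h x) + b) x := by
  refine (hF.exp.mul hh).congr_deriv ?_
  rw [← mul_assoc (Real.exp (F x)) (Real.exp (-F x)) b, ← Real.exp_add, add_neg_cancel,
    Real.exp_zero]
  ring

lemma exists_eq_const_mul_exp {τ σ : ℝ} {F α : ℝ → ℝ}
    (hF : ∀ x, HasDerivAt F (τ * x + σ) x) (hα : Differentiable ℝ α)
    (h : ∀ x, deriv α x - (τ * x + σ) * α x = 0) :
    ∃ c, ∀ x, α x = c * Real.exp (F x) := by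
  have hd : ∀ x, HasDerivAt (fun y => Real.exp (-F y) * α y) 0 x := fun x =>
    (hasDerivAt_exp_neg_mul (hF x) (hα x).hasDerivAt).congr_deriv (by rw [h, mul_zero])
  refine ⟨Real.exp (-F 0) * α 0, fun x => ?_⟩
  have := is_const_of_deriv_eq_zero (fun x => (hd x).differentiableAt) (fun x => (hd x).deriv) x 0
  rw [← this, mul_right_comm, ← Real.exp_add, neg_add_cancel, Real.exp_zero, one_mul]

/-- For the quadratic `f(x) = (τ/2)x² + σx + κ` with `τ ≠ 0` and the twisted
differential `d_f(α) = α′ − f′·α` on Schwartz space (`f′ x = τ·x + σ`):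
if `τ < 0`, the Gaussian `e^f` is Schwartz, the kernel of `d_f` is exactly `ℝ·e^f`,
and `d_f` is surjective; if `τ > 0`, `d_f` is injective and its range is exactly
`{β : ∫ e^{−f}·β = 0}`, the functional `β ↦ ∫ e^{−f}·β` being moreover surjective onto ℝ,
so the quotient `𝒮 / range(d_f)` is one-dimensional. Hence the two-term complex
`0 → 𝒮 → 𝒮 → 0` has one-dimensional total cohomology, concentrated in degree 0 when
`τ < 0` and in degree 1 when `τ > 0`. -/
theorem twisted_complex_cohomology (τ σ κ : ℝ) (hτ : τ ≠ 0) (f : ℝ → ℝ)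
    (hf : ∀ x, f x = τ / 2 * x ^ 2 + σ * x + κ) :
    (τ < 0 →
      (∃ g : SchwartzMap ℝ ℝ, ∀ x : ℝ, g x = Real.exp (f x)) ∧
      (∀ α : SchwartzMap ℝ ℝ,
        (∀ x : ℝ, deriv (⇑α) x - (τ * x + σ) * α x = 0) ↔
          ∃ c : ℝ, ∀ x : ℝ, α x = c * Real.exp (f x)) ∧
      (∀ β : SchwartzMap ℝ ℝ, ∃ α : SchwartzMap ℝ ℝ,
        ∀ x : ℝ, deriv (⇑α) x - (τ * x + σ) * α x = β x)) ∧
    (0 < τ →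
      (∀ α₁ α₂ : SchwartzMap ℝ ℝ,
        (∀ x : ℝ, deriv (⇑α₁) x - (τ * x + σ) * α₁ x
            = deriv (⇑α₂) x - (τ * x + σ) * α₂ x) → α₁ = α₂) ∧
      (∀ β : SchwartzMap ℝ ℝ,
        (∃ α : SchwartzMap ℝ ℝ,
          ∀ x : ℝ, deriv (⇑α) x - (τ * x + σ) * α x = β x) ↔
          (∫ t : ℝ, Real.exp (-(f t)) * β t) = 0) ∧
      (∀ r : ℝ, ∃ β : SchwartzMap ℝ ℝ,
        (∫ t : ℝ, Real.exp (-(f t)) * β t) = r)) := by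
  have hF : ∀ x, HasDerivAt f (τ * x + σ) x := fun x => by
    rw [funext hf]
    refine ((((hasDerivAt_pow 2 x).const_mul (τ / 2)).add
      ((hasDerivAt_id x).const_mul σ)).add_const κ).congr_deriv ?_
    simp
    ring
  refine ⟨fun hneg => ⟨exists_schwartzMap_eq_exp hneg hF, fun α => ⟨fun h =>
    exists_eq_const_mul_exp hF α.differentiable h, ?_⟩, fun β => ?_⟩, fun hpos => ?_⟩
  · rintro ⟨c, hc⟩ x
    rw [funext hc, ((hF x).exp.const_mul c).deriv]
    ring
  · have hg : Continuous fun t => Real.exp (-f t) * β t := by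
      have : Continuous f := continuous_iff_continuousAt.2 fun x => (hF x).continuousAt
      have := β.continuous
      fun_prop
    have hα : ∀ x, HasDerivAt
        (fun y => Real.exp (f y) * ∫ t in (0 : ℝ)..y, Real.exp (-f t) * β t) _ x := fun x =>
      hasDerivAt_exp_mul_of_hasDerivAt (hF x) (hg.integral_hasStrictDerivAt 0 x).hasDerivAt
    obtain ⟨α, h⟩ := exists_schwartzMap_eq_of_neg hneg hα
    refine ⟨α, fun x => ?_⟩
    rw [funext h, (hα x).deriv]
    ring
  · obtain ⟨φ, hφ⟩ := exists_schwartzMap_eq_exp (σ := -σ) (neg_neg_of_pos hpos)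
      fun x => (hF x).neg.congr_deriv (by ring)
    simp only [Pi.neg_apply] at hφ
    have hmul : ∀ β : SchwartzMap ℝ ℝ, ∃ g : SchwartzMap ℝ ℝ,
        ∀ x, g x = Real.exp (-f x) * β x := fun β =>
      ⟨smulLeftCLM ℝ φ β, fun x => by
        rw [smulLeftCLM_apply_apply φ.hasTemperateGrowth, hφ, smul_eq_mul]⟩
    refine ⟨fun α₁ α₂ h => ?_, fun β => ⟨?_, fun hβ => ?_⟩, fun r => ?_⟩
    · obtain ⟨c, hc⟩ := exists_eq_const_mul_exp hF (α₁ - α₂).differentiable fun x => by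
        have hd := ((α₁.hasDerivAt x).sub (α₂.hasDerivAt x)).deriv
        change deriv (⇑α₁ - ⇑α₂) x - (τ * x + σ) * (α₁ x - α₂ x) = 0
        rw [hd]
        linarith [h x]
      obtain ⟨g, hg⟩ := hmul (α₁ - α₂)
      have hgc : ∀ x, g x = c := fun x => by
        rw [hg, hc, mul_left_comm, ← Real.exp_add, neg_add_cancel, Real.exp_zero, mul_one]
      have hc0 : c = 0 := tendsto_nhds_unique
        (by simpa only [funext hgc] using tendsto_const_nhds) g.tendsto_cocompact
      refine sub_eq_zero.1 (SchwartzMap.ext fun x => ?_)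
      rw [hc, hc0, zero_mul, zero_apply]
    · rintro ⟨α, hα⟩
      obtain ⟨g, hg⟩ := hmul β
      obtain ⟨h, hh⟩ := hmul α
      refine integral_eq_zero_of_hasDerivAt_of_integrable
        (fun x => (hasDerivAt_exp_neg_mul (hF x) (α.hasDerivAt x)).congr_deriv (by rw [hα])) ?_ ?_
      · simpa only [funext hg] using g.integrable (μ := volume)
      · simpa only [funext hh] using h.integrable (μ := volume)
    · obtain ⟨g, hg⟩ := hmul β
      simp only [← hg] at hβ
      have hgi : Integrable g := g.integrable
      have hsplit := intervalIntegral.integral_Iic_add_Ioi (b := 0)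
        hgi.integrableOn hgi.integrableOn
      rw [hβ] at hsplit
      have hα : ∀ x, HasDerivAt
          (fun y => Real.exp (f y) * ((∫ t in (0 : ℝ)..y, g t) - ∫ t in Set.Ioi 0, g t)) _ x :=
        fun x => hasDerivAt_exp_mul_of_hasDerivAt (b := β x) (hF x)
          (((g.continuous.integral_hasStrictDerivAt 0 x).hasDerivAt.sub_const _).congr_deriv (hg x))
      have hcancel : ∀ y z : ℝ, Real.exp (-f y) * (Real.exp (f y) * z) = z := fun y z => by
        rw [← mul_assoc, ← Real.exp_add, neg_add_cancel, Real.exp_zero, one_mul]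
      obtain ⟨α, h⟩ := exists_schwartzMap_eq_of_pos hpos hF hφ hα
        (by
          simp only [hcancel]
          simpa using (intervalIntegral_tendsto_integral_Ioi 0 hgi.integrableOn
            tendsto_id).sub_const (∫ t in Set.Ioi 0, g t))
        (by
          simp only [hcancel]
          have := ((intervalIntegral_tendsto_integral_Iic 0 hgi.integrableOn
            tendsto_id).neg).sub_const (∫ t in Set.Ioi 0, g t)
          rw [← neg_add', hsplit, neg_zero] at this
          refine this.congr fun x => ?_
          rw [← intervalIntegral.integral_symm, id])
      refine ⟨α, fun x => ?_⟩
      rw [funext h, (hα x).deriv]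
      ring
    · obtain ⟨g, hg⟩ := hmul φ
      have hint : 0 < ∫ t, g t := by
        refine integral_pos_of_integrable_nonneg_nonzero g.continuous g.integrable
          (fun x => ?_) (x := 0) ?_
        · rw [hg, hφ]
          positivity
        · rw [hg, hφ]
          positivity
      refine ⟨(r / ∫ t, g t) • φ, ?_⟩
      simp only [smul_apply, smul_eq_mul, mul_left_comm _ (r / _), ← hg]
      rw [integral_const_mul, div_mul_cancel₀ _ hint.ne']
end

section
/- Let f(x) = (τ/2)·x² + σ·x + κ be a real quadratic polynomial with τ > 0. For β ∈ 𝒮 define h(β)(x) = e^{f(x)} · ∫_{−∞}^x e^{−f(t)}·β(t) dt; the integral converges absolutely since e^{−f} is a Gaussian. Then h(α′ − f′·α) = α for every α ∈ 𝒮 (pointwise on ℝ); in particular the twisted differential d_f : 𝒮 → 𝒮, d_f(α) = α′ − f′·α, is injective. -/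
open MeasureTheory Filter Topology

/-- A quadratic polynomial with positive leading coefficient is bounded below by its vertex value. -/
lemma quadratic_vertex_le {τ : ℝ} (hτ : 0 < τ) (σ κ x : ℝ) :
    κ - σ ^ 2 / (2 * τ) ≤ τ / 2 * x ^ 2 + σ * x + κ := by
  have key : τ / 2 * x ^ 2 + σ * x + κ - (κ - σ ^ 2 / (2 * τ)) = (τ * x + σ) ^ 2 / (2 * τ) := by
    field_simp
    ring
  have : 0 ≤ (τ * x + σ) ^ 2 / (2 * τ) := by positivity
  linarith

lemma SchwartzMap.integrable_id_mul (α : SchwartzMap ℝ ℝ) :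
    Integrable fun t : ℝ => t * α t := by
  refine (α.integrable_pow_mul volume 1).mono'
    (continuous_id.mul α.continuous).aestronglyMeasurable (ae_of_all _ fun t => ?_)
  simp

lemma SchwartzMap.integrable_deriv (α : SchwartzMap ℝ ℝ) : Integrable (deriv α) :=
  (SchwartzMap.derivCLM ℝ ℝ α).integrable

lemma SchwartzMap.tendsto_atBot (α : SchwartzMap ℝ ℝ) : Tendsto α atBot (𝓝 0) :=
  (zero_at_infty α).mono_left atBot_le_cocompact

/-- For the quadratic `f(x) = (τ/2)x² + σx + κ` with `τ > 0`, define
`h(β)(x) = e^{f(x)} · ∫_{−∞}^x e^{−f(t)}·β(t) dt`; the integral converges absolutely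
since `e^{−f}` is a Gaussian. Then `h(α′ − f′·α) = α` pointwise for every Schwartz α;
in particular the twisted differential `d_f(α) = α′ − f′·α` is injective on 𝒮. -/
theorem homotopy_left_inverse (τ σ κ : ℝ) (hτ : 0 < τ) (f : ℝ → ℝ)
    (hf : ∀ x, f x = τ / 2 * x ^ 2 + σ * x + κ) :
    (∀ β : SchwartzMap ℝ ℝ, ∀ x : ℝ,
      IntegrableOn (fun t : ℝ => Real.exp (-(f t)) * β t) (Set.Iic x)) ∧
    (∀ α : SchwartzMap ℝ ℝ, ∀ x : ℝ,
      Real.exp (f x) *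
        (∫ t in Set.Iic x,
          Real.exp (-(f t)) * (deriv (⇑α) t - (τ * t + σ) * α t)) = α x) ∧
    (∀ α₁ α₂ : SchwartzMap ℝ ℝ,
      (∀ x : ℝ, deriv (⇑α₁) x - (τ * x + σ) * α₁ x
          = deriv (⇑α₂) x - (τ * x + σ) * α₂ x) → α₁ = α₂) := by
  obtain rfl : f = fun x => τ / 2 * x ^ 2 + σ * x + κ := funext hf
  clear hf
  set f : ℝ → ℝ := fun x => τ / 2 * x ^ 2 + σ * x + κ
  have hcont : Continuous fun t => Real.exp (-(f t)) := by fun_prop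
  have hbound : ∀ t, ‖Real.exp (-(f t))‖ ≤ Real.exp (-(κ - σ ^ 2 / (2 * τ))) := fun t => by
    rw [Real.norm_of_nonneg (Real.exp_nonneg _)]
    exact Real.exp_le_exp.2 (neg_le_neg (quadratic_vertex_le hτ σ κ t))
  have hint : ∀ g : ℝ → ℝ, Integrable g → Integrable fun t => Real.exp (-(f t)) * g t :=
    fun g hg => hg.bdd_mul hcont.aestronglyMeasurable (ae_of_all _ hbound)
  have hinv : ∀ α : SchwartzMap ℝ ℝ, ∀ x : ℝ,
      Real.exp (f x) *
        (∫ t in Set.Iic x,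
          Real.exp (-(f t)) * (deriv (⇑α) t - (τ * t + σ) * α t)) = α x := by
    intro α x
    have hd : Integrable fun t => deriv (⇑α) t - (τ * t + σ) * α t := by
      refine α.integrable_deriv.sub
        (((α.integrable_id_mul.const_mul τ).add (α.integrable.const_mul σ)).congr
          (ae_of_all _ fun t => ?_))
      simp only [Pi.add_apply]
      ring
    have hderiv : ∀ t, HasDerivAt (fun t => Real.exp (-(f t)) * α t)
        (Real.exp (-(f t)) * (deriv (⇑α) t - (τ * t + σ) * α t)) t := by
      intro t
      have hf' : HasDerivAt f (τ * t + σ) t := by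
        convert! ((((hasDerivAt_id t).pow 2).const_mul (τ / 2)).add
          ((hasDerivAt_id t).const_mul σ)).add_const κ using 1
        simp
        ring
      convert! hf'.neg.exp.mul α.differentiableAt.hasDerivAt using 1
      simp only [Pi.neg_apply]
      ring
    have hlim : Tendsto (fun t => Real.exp (-(f t)) * α t) atBot (𝓝 0) :=
      isBoundedUnder_le_mul_tendsto_zero (isBoundedUnder_of ⟨_, hbound⟩) α.tendsto_atBot
    rw [integral_Iic_of_hasDerivAt_of_tendsto' (fun t _ => hderiv t) (hint _ hd).integrableOn hlim,
      sub_zero, ← mul_assoc, ← Real.exp_add, add_neg_cancel, Real.exp_zero, one_mul]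
  refine ⟨fun β x => (hint _ β.integrable).integrableOn, hinv, fun α₁ α₂ h => ?_⟩
  ext x
  rw [← hinv α₁ x, ← hinv α₂ x]
  simp_rw [h]
end

section
/- Let f(x) = (τ/2)·x² + σ·x + κ be a real quadratic polynomial with τ < 0. Define, for β ∈ 𝒮, h(β)(x) = e^{f(x)} · ∫_0^x e^{−f(t)}·β(t) dt, and define P(α) = α(0)·e^{f − f(0)}. Then: (i) h maps 𝒮 into 𝒮; (ii) d_f(h(β)) = β for every β ∈ 𝒮, so d_f : 𝒮 → 𝒮 is surjective; (iii) h(d_f(α)) = α − P(α) for every α ∈ 𝒮; and (iv) P is an idempotent linear projection of 𝒮 onto the one-dimensional subspace ℝ·e^f. In other words, (h, P) are strong deformation retract data for the complex (𝒮 →^{d_f} 𝒮), contracting it onto ℝ·e^f placed in degree 0. -/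
open MeasureTheory

/-- Polynomial functions have temperate growth. -/
lemma Polynomial.hasTemperateGrowth_eval (p : Polynomial ℝ) :
    Function.HasTemperateGrowth (fun x : ℝ => p.eval x) := by
  induction p using Polynomial.induction_on' with
  | add p q hp hq =>
    simp only [Polynomial.eval_add]
    exact hp.add hq
  | monomial n a =>
    simp only [Polynomial.eval_monomial]
    fun_prop

/-- Rapid decay is preserved by multiplication by a polynomial. -/
lemma Polynomial.exists_pow_mul_norm_eval_mul_le (p : Polynomial ℝ) {u : ℝ → ℝ}
    (hu : ∀ k : ℕ, ∃ C : ℝ, ∀ x, ‖x‖ ^ k * ‖u x‖ ≤ C) (k : ℕ) :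
    ∃ C : ℝ, ∀ x, ‖x‖ ^ k * ‖p.eval x * u x‖ ≤ C := by
  induction p using Polynomial.induction_on' with
  | add p q hp hq =>
    obtain ⟨C, hC⟩ := hp
    obtain ⟨D, hD⟩ := hq
    refine ⟨C + D, fun x => ?_⟩
    calc ‖x‖ ^ k * ‖(p + q).eval x * u x‖
        ≤ ‖x‖ ^ k * (‖p.eval x * u x‖ + ‖q.eval x * u x‖) := by
          rw [Polynomial.eval_add, add_mul]
          gcongr
          exact norm_add_le _ _
      _ ≤ C + D := by linarith [hC x, hD x]
  | monomial n a =>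
    obtain ⟨C, hC⟩ := hu (k + n)
    refine ⟨‖a‖ * C, fun x => ?_⟩
    calc ‖x‖ ^ k * ‖(Polynomial.monomial n a).eval x * u x‖
        = ‖a‖ * (‖x‖ ^ (k + n) * ‖u x‖) := by
          rw [Polynomial.eval_monomial, norm_mul, norm_mul, norm_pow]
          ring
      _ ≤ ‖a‖ * C := by gcongr; exact hC x

/-- The iterated derivatives of a solution of `u' = q u + β` with `q` polynomial and `β` Schwartz
are polynomial multiples of `u` up to Schwartz functions. -/
lemma exists_iteratedDeriv_eq_eval_mul_add (q : Polynomial ℝ) (β : SchwartzMap ℝ ℝ) {u : ℝ → ℝ}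
    (hu : ∀ x, HasDerivAt u (q.eval x * u x + β x) x) (n : ℕ) :
    ∃ (p : Polynomial ℝ) (s : SchwartzMap ℝ ℝ),
      iteratedDeriv n u = fun x => p.eval x * u x + s x := by
  induction n with
  | zero => exact ⟨1, 0, by simp⟩
  | succ n ih =>
    obtain ⟨p, s, hps⟩ := ih
    refine ⟨Polynomial.derivative p + p * q,
      SchwartzMap.smulLeftCLM ℝ (fun x => p.eval x) β + SchwartzMap.derivCLM ℝ ℝ s, ?_⟩
    funext x
    rw [iteratedDeriv_succ, hps,
      (((p.hasDerivAt x).fun_mul (hu x)).fun_add (s.differentiableAt (x := x)).hasDerivAt).deriv]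
    simp [SchwartzMap.smulLeftCLM_apply_apply p.hasTemperateGrowth_eval]
    ring

/-- A rapidly decreasing solution of `u' = q u + β`, with `q` polynomial and `β` Schwartz, is a
Schwartz function. -/
lemma exists_schwartzMap_eq_of_hasDerivAt_s4 (q : Polynomial ℝ) (β : SchwartzMap ℝ ℝ) {u : ℝ → ℝ}
    (hu : ∀ x, HasDerivAt u (q.eval x * u x + β x) x)
    (hdecay : ∀ k : ℕ, ∃ C : ℝ, ∀ x, ‖x‖ ^ k * ‖u x‖ ≤ C) :
    ∃ γ : SchwartzMap ℝ ℝ, ∀ x, γ x = u x := by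
  refine ⟨⟨u, contDiff_of_differentiable_iteratedDeriv fun n _ => ?_, fun k n => ?_⟩,
    fun _ => rfl⟩
  · obtain ⟨p, s, hps⟩ := exists_iteratedDeriv_eq_eval_mul_add q β hu n
    rw [hps]
    exact (p.differentiable.mul fun x => (hu x).differentiableAt).add s.differentiable
  · obtain ⟨p, s, hps⟩ := exists_iteratedDeriv_eq_eval_mul_add q β hu n
    obtain ⟨C, hC⟩ := p.exists_pow_mul_norm_eval_mul_le hdecay k
    obtain ⟨D, -, hD⟩ := s.decay k 0
    refine ⟨C + D, fun x => ?_⟩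
    have hDx : ‖x‖ ^ k * ‖s x‖ ≤ D := by simpa using hD x
    calc ‖x‖ ^ k * ‖iteratedFDeriv ℝ n u x‖
        ≤ ‖x‖ ^ k * (‖p.eval x * u x‖ + ‖s x‖) := by
          rw [norm_iteratedFDeriv_eq_norm_iteratedDeriv, hps]
          gcongr
          exact norm_add_le _ _
      _ ≤ C + D := by linarith [hC x]

/-- A Gaussian factor with negative quadratic coefficient absorbs any polynomial weight. -/
lemma exists_one_add_pow_mul_exp_le {τ : ℝ} (hτ : τ < 0) (σ : ℝ) (k : ℕ) :
    ∃ M : ℝ, ∀ r : ℝ, 0 ≤ r → (1 + r) ^ k * Real.exp (τ / 2 * r ^ 2 + σ * r) ≤ M := by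
  refine ⟨k.factorial * Real.exp (1 - (1 + σ) ^ 2 / (2 * τ)), fun r hr => ?_⟩
  have hpow : (1 + r) ^ k ≤ k.factorial * Real.exp (1 + r) := by
    have h := Real.pow_div_factorial_le_exp (1 + r) (by linarith) k
    rwa [div_le_iff₀' (by positivity)] at h
  have hsq : (1 + r) + (τ / 2 * r ^ 2 + σ * r) ≤ 1 - (1 + σ) ^ 2 / (2 * τ) := by
    have h : 1 - (1 + σ) ^ 2 / (2 * τ) - ((1 + r) + (τ / 2 * r ^ 2 + σ * r))
        = (τ * r + (1 + σ)) ^ 2 / (2 * -τ) := by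
      field_simp [hτ.ne]
      ring
    have : 0 ≤ (τ * r + (1 + σ)) ^ 2 / (2 * -τ) := by
      have : 0 < -τ := by linarith
      positivity
    linarith
  calc (1 + r) ^ k * Real.exp (τ / 2 * r ^ 2 + σ * r)
      ≤ k.factorial * Real.exp (1 + r) * Real.exp (τ / 2 * r ^ 2 + σ * r) := by gcongr
    _ = k.factorial * Real.exp ((1 + r) + (τ / 2 * r ^ 2 + σ * r)) := by
        rw [mul_assoc, ← Real.exp_add]
    _ ≤ _ := by gcongr

/-- If `t` lies between `0` and `x`, then `f x - f t` is controlled by `|x - t|` alone. -/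
lemma quadratic_sub_le_of_mem_uIcc {τ : ℝ} (hτ : τ < 0) (σ : ℝ) {x t : ℝ}
    (ht : t ∈ Set.uIcc 0 x) :
    (τ / 2 * x ^ 2 + σ * x) - (τ / 2 * t ^ 2 + σ * t)
      ≤ τ / 2 * |x - t| ^ 2 + |σ| * |x - t| := by
  have hmul : 0 ≤ t * (x - t) := by
    rcases Set.mem_uIcc.1 ht with h | h
    · exact mul_nonneg h.1 (by linarith)
    · exact mul_nonneg_of_nonpos_of_nonpos h.2 (by linarith)
  have hlin : σ * (x - t) ≤ |σ| * |x - t| := by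
    rw [← abs_mul]
    exact le_abs_self _
  rw [sq_abs]
  nlinarith

/-- A Schwartz function is bounded by a multiple of `(1 + |x|)⁻ᵏ (1 + x²)⁻¹`. -/
lemma SchwartzMap.exists_one_add_abs_pow_mul_abs_le (β : SchwartzMap ℝ ℝ) (k : ℕ) :
    ∃ C : ℝ, 0 ≤ C ∧ ∀ t, (1 + |t|) ^ k * |β t| ≤ C * (1 + t ^ 2)⁻¹ := by
  refine ⟨2 ^ (k + 2) * (Finset.Iic (k + 2, 0)).sup
    (fun m => SchwartzMap.seminorm ℝ m.1 m.2) β, by positivity, fun t => ?_⟩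
  have h := SchwartzMap.one_add_le_sup_seminorm_apply (𝕜 := ℝ) (m := (k + 2, 0)) le_rfl le_rfl β t
  rw [norm_iteratedFDeriv_zero, Real.norm_eq_abs, Real.norm_eq_abs] at h
  rw [← div_eq_mul_inv, le_div_iff₀ (by positivity)]
  refine le_trans ?_ h
  have hsq : 1 + t ^ 2 ≤ (1 + |t|) ^ 2 := by nlinarith [abs_nonneg t, sq_abs t]
  calc (1 + |t|) ^ k * |β t| * (1 + t ^ 2) ≤ (1 + |t|) ^ k * |β t| * (1 + |t|) ^ 2 := by gcongr
    _ = (1 + |t|) ^ (k + 2) * |β t| := by ring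

/-- The homotopy `x ↦ e^{f x} ∫₀ˣ e^{-f} β` is rapidly decreasing. -/
lemma exists_pow_mul_norm_exp_mul_integral_le {τ : ℝ} (hτ : τ < 0) (σ κ : ℝ) {f : ℝ → ℝ}
    (hf : ∀ x, f x = τ / 2 * x ^ 2 + σ * x + κ) (β : SchwartzMap ℝ ℝ) (k : ℕ) :
    ∃ C : ℝ, ∀ x,
      ‖x‖ ^ k * ‖Real.exp (f x) * ∫ t in (0:ℝ)..x, Real.exp (-(f t)) * β t‖ ≤ C := by
  obtain ⟨M, hM⟩ := exists_one_add_pow_mul_exp_le hτ |σ| k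
  obtain ⟨C, hC0, hC⟩ := β.exists_one_add_abs_pow_mul_abs_le k
  have hM0 : 0 ≤ M := le_trans (by positivity) (hM 0 le_rfl)
  refine ⟨M * C * (Real.pi / 2), fun x => ?_⟩
  have hbound : ∀ t ∈ Set.uIoc 0 x,
      ‖‖x‖ ^ k * (Real.exp (f x) * (Real.exp (-(f t)) * β t))‖ ≤ M * C * (1 + t ^ 2)⁻¹ := by
    intro t ht
    have hexp : f x + -(f t) ≤ τ / 2 * |x - t| ^ 2 + |σ| * |x - t| := by
      rw [hf, hf]
      linarith [quadratic_sub_le_of_mem_uIcc hτ σ (Set.uIoc_subset_uIcc ht)]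
    have hweight : |x| ≤ (1 + |x - t|) * (1 + |t|) := by
      have := abs_add_le (x - t) t
      rw [sub_add_cancel] at this
      nlinarith [abs_nonneg (x - t), abs_nonneg t, mul_nonneg (abs_nonneg (x - t)) (abs_nonneg t)]
    calc ‖‖x‖ ^ k * (Real.exp (f x) * (Real.exp (-(f t)) * β t))‖
        = |x| ^ k * (Real.exp (f x + -(f t)) * |β t|) := by
          rw [← mul_assoc (Real.exp (f x)), ← Real.exp_add]
          simp
      _ ≤ ((1 + |x - t|) * (1 + |t|)) ^ k
            * (Real.exp (τ / 2 * |x - t| ^ 2 + |σ| * |x - t|) * |β t|) := by gcongr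
      _ = ((1 + |x - t|) ^ k * Real.exp (τ / 2 * |x - t| ^ 2 + |σ| * |x - t|))
            * ((1 + |t|) ^ k * |β t|) := by rw [mul_pow]; ring
      _ ≤ M * (C * (1 + t ^ 2)⁻¹) := by
          exact mul_le_mul (hM _ (abs_nonneg _)) (hC t) (by positivity) hM0
      _ = M * C * (1 + t ^ 2)⁻¹ := by ring
  have hint : IntervalIntegrable (fun t : ℝ => M * C * (1 + t ^ 2)⁻¹) volume 0 x :=
    (intervalIntegral.intervalIntegrable_inv_one_add_sq).const_mul _
  calc ‖x‖ ^ k * ‖Real.exp (f x) * ∫ t in (0:ℝ)..x, Real.exp (-(f t)) * β t‖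
      = ‖∫ t in (0:ℝ)..x, ‖x‖ ^ k * (Real.exp (f x) * (Real.exp (-(f t)) * β t))‖ := by
        rw [intervalIntegral.integral_const_mul, intervalIntegral.integral_const_mul]
        simp
    _ ≤ |∫ t in (0:ℝ)..x, M * C * (1 + t ^ 2)⁻¹| :=
        intervalIntegral.norm_integral_le_abs_of_norm_le
          ((ae_restrict_mem measurableSet_uIoc).mono hbound) hint
    _ = M * C * |Real.arctan x| := by
        rw [intervalIntegral.integral_const_mul, integral_inv_one_add_sq, Real.arctan_zero,
          sub_zero, abs_mul, abs_of_nonneg (mul_nonneg hM0 hC0)]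
    _ ≤ M * C * (Real.pi / 2) := by
        gcongr
        exact abs_le.2 ⟨(Real.neg_pi_div_two_lt_arctan x).le, (Real.arctan_lt_pi_div_two x).le⟩

/-- Variation of constants: `x ↦ e^{f x} ∫₀ˣ e^{-f} β` solves `u' = f' u + β`. -/
lemma hasDerivAt_exp_mul_integral {f f' β : ℝ → ℝ} (hf : ∀ x, HasDerivAt f (f' x) x)
    (hβ : Continuous β) (x : ℝ) :
    HasDerivAt (fun y => Real.exp (f y) * ∫ t in (0:ℝ)..y, Real.exp (-(f t)) * β t)
      (f' x * (Real.exp (f x) * ∫ t in (0:ℝ)..x, Real.exp (-(f t)) * β t) + β x) x := by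
  have hfc : Continuous f := continuous_iff_continuousAt.2 fun y => (hf y).continuousAt
  have hc : Continuous fun t => Real.exp (-(f t)) * β t := by fun_prop
  refine ((hf x).exp.fun_mul (hc.integral_hasStrictDerivAt 0 x).hasDerivAt).congr_deriv ?_
  rw [← mul_assoc (Real.exp (f x)) (Real.exp (-(f x))), ← Real.exp_add, add_neg_cancel,
    Real.exp_zero]
  ring

/-- Integrating `(e^{-f} α)'` recovers `α` up to a multiple of `e^f`. -/
lemma exp_mul_integral_deriv_sub {f f' α : ℝ → ℝ} (hf : ∀ x, HasDerivAt f (f' x) x)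
    (hf' : Continuous f') (hα : ContDiff ℝ 1 α) (x : ℝ) :
    Real.exp (f x) * (∫ t in (0:ℝ)..x, Real.exp (-(f t)) * (deriv α t - f' t * α t))
      = α x - α 0 * Real.exp (f x - f 0) := by
  have hfc : Continuous f := continuous_iff_continuousAt.2 fun y => (hf y).continuousAt
  have hαc : Continuous α := hα.continuous
  have hα'c : Continuous (deriv α) := hα.continuous_deriv le_rfl
  have hderiv : ∀ t ∈ Set.uIcc 0 x, HasDerivAt (fun t => Real.exp (-(f t)) * α t)
      (Real.exp (-(f t)) * (deriv α t - f' t * α t)) t := by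
    intro t _
    refine ((hf t).fun_neg.exp.fun_mul
      (hα.differentiable one_ne_zero t).hasDerivAt).congr_deriv ?_
    ring
  rw [intervalIntegral.integral_eq_sub_of_hasDerivAt hderiv
    (Continuous.intervalIntegrable (by fun_prop) _ _), mul_sub, ← mul_assoc, ← mul_assoc,
    ← Real.exp_add, ← Real.exp_add, add_neg_cancel, Real.exp_zero, ← sub_eq_add_neg]
  ring

/-- For the quadratic `f(x) = (τ/2)x² + σx + κ` with `τ < 0`, define
`h(β)(x) = e^{f(x)} · ∫_0^x e^{−f(t)}·β(t) dt` and `P(α) = α(0)·e^{f − f(0)}`. Then: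
(i) `h` maps 𝒮 into 𝒮; (ii) `d_f(h(β)) = β` for every β ∈ 𝒮, so `d_f` is surjective;
(iii) `h(d_f(α)) = α − P(α)` for every α ∈ 𝒮; (iv) `P` is an idempotent linear
projection of 𝒮 onto the one-dimensional subspace `ℝ·e^f`. In other words, `(h, P)`
are strong deformation retract data contracting `(𝒮 → 𝒮, d_f)` onto `ℝ·e^f` in degree 0. -/
theorem sdr_data_negative_slope (τ σ κ : ℝ) (hτ : τ < 0) (f : ℝ → ℝ)
    (hf : ∀ x, f x = τ / 2 * x ^ 2 + σ * x + κ) :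
    -- (i) h maps 𝒮 into 𝒮
    (∀ β : SchwartzMap ℝ ℝ, ∃ γ : SchwartzMap ℝ ℝ, ∀ x : ℝ,
      γ x = Real.exp (f x) * ∫ t in (0:ℝ)..x, Real.exp (-(f t)) * β t) ∧
    -- (ii) d_f ∘ h = Id, so d_f is surjective
    (∀ β : SchwartzMap ℝ ℝ, ∀ x : ℝ,
      deriv (fun y => Real.exp (f y) * ∫ t in (0:ℝ)..y, Real.exp (-(f t)) * β t) x
        - (τ * x + σ) *
          (Real.exp (f x) * ∫ t in (0:ℝ)..x, Real.exp (-(f t)) * β t) = β x) ∧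
    (∀ β : SchwartzMap ℝ ℝ, ∃ α : SchwartzMap ℝ ℝ,
      ∀ x : ℝ, deriv (⇑α) x - (τ * x + σ) * α x = β x) ∧
    -- (iii) h ∘ d_f = Id − P
    (∀ α : SchwartzMap ℝ ℝ, ∀ x : ℝ,
      Real.exp (f x) *
        (∫ t in (0:ℝ)..x, Real.exp (-(f t)) * (deriv (⇑α) t - (τ * t + σ) * α t))
        = α x - α 0 * Real.exp (f x - f 0)) ∧
    -- (iv) P is an idempotent linear projection onto ℝ·e^f
    (∀ α : ℝ → ℝ, ∀ x : ℝ,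
      (fun y => α 0 * Real.exp (f y - f 0)) 0 * Real.exp (f x - f 0)
        = α 0 * Real.exp (f x - f 0)) ∧
    (∀ (a b : ℝ) (α β : ℝ → ℝ), ∀ x : ℝ,
      (a * α 0 + b * β 0) * Real.exp (f x - f 0)
        = a * (α 0 * Real.exp (f x - f 0)) + b * (β 0 * Real.exp (f x - f 0))) ∧
    (∀ α : ℝ → ℝ, ∃ c : ℝ, ∀ x : ℝ,
      α 0 * Real.exp (f x - f 0) = c * Real.exp (f x)) ∧
    (∀ c : ℝ, ∀ x : ℝ,
      (fun y => c * Real.exp (f y)) 0 * Real.exp (f x - f 0) = c * Real.exp (f x)) := by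
  have hf_deriv : ∀ x, HasDerivAt f (τ * x + σ) x := by
    intro x
    rw [funext hf]
    refine ((((hasDerivAt_pow 2 x).const_mul (τ / 2)).fun_add
      ((hasDerivAt_id' x).const_mul σ)).add_const κ).congr_deriv ?_
    norm_num
    ring
  have h_deriv := fun β : SchwartzMap ℝ ℝ => hasDerivAt_exp_mul_integral hf_deriv β.continuous
  have h_schwartz : ∀ β : SchwartzMap ℝ ℝ, ∃ γ : SchwartzMap ℝ ℝ, ∀ x : ℝ,
      γ x = Real.exp (f x) * ∫ t in (0:ℝ)..x, Real.exp (-(f t)) * β t := fun β =>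
    exists_schwartzMap_eq_of_hasDerivAt_s4 (Polynomial.C τ * Polynomial.X + Polynomial.C σ) β
      (fun x => by simpa using h_deriv β x)
      (exists_pow_mul_norm_exp_mul_integral_le hτ σ κ hf β)
  refine ⟨h_schwartz, fun β x => ?_, fun β => ?_, fun α x => ?_, fun α x => ?_,
    fun a b α β x => ?_, fun α => ⟨α 0 * Real.exp (-(f 0)), fun x => ?_⟩, fun c x => ?_⟩
  · rw [(h_deriv β x).deriv]
    ring
  · obtain ⟨γ, hγ⟩ := h_schwartz β
    refine ⟨γ, fun x => ?_⟩
    rw [funext hγ, (h_deriv β x).deriv]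
    ring
  · exact exp_mul_integral_deriv_sub hf_deriv (by fun_prop) (α.smooth 1) x
  · simp
  · ring
  · rw [sub_eq_add_neg, Real.exp_add]
    ring
  · simp only [mul_assoc, ← Real.exp_add, add_sub_cancel]
end

section
/- Let f(x) = (τ/2)·x² + σ·x + κ be a real quadratic polynomial with τ > 0, and let β ∈ 𝒮. Then there exists α ∈ 𝒮 with α′ − f′·α = β if and only if ∫_ℝ e^{−f(t)}·β(t) dt = 0. Consequently the linear functional β ↦ ∫_ℝ e^{−f}·β induces a linear isomorphism 𝒮 / d_f(𝒮) ≅ ℝ, i.e. the first cohomology of the twisted complex (𝒮 →^{d_f} 𝒮) is one-dimensional. -/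
open MeasureTheory

open Filter Topology Set
open scoped ContDiff

/-- A real function decays rapidly if its product with every power of `|x|` is bounded. -/
def RapidDecay (g : ℝ → ℝ) : Prop :=
  ∀ k : ℕ, ∃ C : ℝ, ∀ x : ℝ, |x| ^ k * |g x| ≤ C

namespace RapidDecay

theorem add {g h : ℝ → ℝ} (hg : RapidDecay g) (hh : RapidDecay h) :
    RapidDecay fun x => g x + h x := by
  intro k
  obtain ⟨C, hC⟩ := hg k
  obtain ⟨D, hD⟩ := hh k
  refine ⟨C + D, fun x => ?_⟩
  calc |x| ^ k * |g x + h x| ≤ |x| ^ k * (|g x| + |h x|) := by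
        gcongr
        exact abs_add_le _ _
    _ ≤ C + D := by
        rw [mul_add]
        exact add_le_add (hC x) (hD x)

theorem const_mul {g : ℝ → ℝ} (hg : RapidDecay g) (c : ℝ) : RapidDecay fun x => c * g x := by
  intro k
  obtain ⟨C, hC⟩ := hg k
  refine ⟨|c| * C, fun x => ?_⟩
  rw [abs_mul, mul_left_comm]
  exact mul_le_mul_of_nonneg_left (hC x) (abs_nonneg c)

theorem id_mul {g : ℝ → ℝ} (hg : RapidDecay g) : RapidDecay fun x => x * g x := by
  intro k
  obtain ⟨C, hC⟩ := hg (k + 1)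
  refine ⟨C, fun x => ?_⟩
  rw [abs_mul, ← mul_assoc, ← pow_succ]
  exact hC x

theorem affine_mul {g : ℝ → ℝ} (hg : RapidDecay g) (τ σ : ℝ) :
    RapidDecay fun x => (τ * x + σ) * g x := by
  have h := (hg.id_mul.const_mul τ).add (hg.const_mul σ)
  refine fun k => (h k).imp fun C hC x => ?_
  convert hC x using 3
  ring

end RapidDecay

theorem SchwartzMap.rapidDecay_iteratedDeriv (β : SchwartzMap ℝ ℝ) (n : ℕ) :
    RapidDecay (iteratedDeriv n β) := by
  intro k
  obtain ⟨C, -, hC⟩ := β.decay k n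
  refine ⟨C, fun x => ?_⟩
  simpa [norm_iteratedFDeriv_eq_norm_iteratedDeriv] using hC x

/-- One-sided comparison for `g' = q g + b` with `q ≥ 1`: a solution that is negligible against
`exp F`, where `F' = q`, is bounded below by minus any bound for the right-hand side. -/
theorem neg_le_of_hasDerivAt_of_tendsto {F q g b : ℝ → ℝ} {x C : ℝ}
    (hF : ∀ t, HasDerivAt F (q t) t) (hg : ∀ t, HasDerivAt g (q t * g t + b t) t)
    (hC : 0 ≤ C) (hq : ∀ t, x ≤ t → 1 ≤ q t) (hb : ∀ t, x ≤ t → b t ≤ C)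
    (hFtop : Tendsto F atTop atTop)
    (hu : Tendsto (fun t => Real.exp (-F t) * g t) atTop (𝓝 0)) : -C ≤ g x := by
  have hderiv (t : ℝ) : HasDerivAt (fun t => Real.exp (-F t) * (g t + C))
      (Real.exp (-F t) * (b t - q t * C)) t := by
    convert! (hF t).neg.exp.mul ((hg t).add_const C) using 1
    simp only [Pi.neg_apply]
    ring
  have hanti : AntitoneOn (fun t => Real.exp (-F t) * (g t + C)) (Ici x) := by
    refine antitoneOn_of_deriv_nonpos (convex_Ici x)
      (fun t _ => (hderiv t).continuousAt.continuousWithinAt)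
      (fun t _ => (hderiv t).differentiableAt.differentiableWithinAt) fun t ht => ?_
    rw [interior_Ici, mem_Ioi] at ht
    rw [(hderiv t).deriv]
    refine mul_nonpos_of_nonneg_of_nonpos (Real.exp_pos _).le ?_
    nlinarith [hq t ht.le, hb t ht.le]
  have hlim : Tendsto (fun t => Real.exp (-F t) * (g t + C)) atTop (𝓝 0) := by
    have hexp : Tendsto (fun t => Real.exp (-F t)) atTop (𝓝 0) :=
      Real.tendsto_exp_neg_atTop_nhds_zero.comp hFtop
    simpa [mul_add] using hu.add (hexp.mul_const C)
  have hnonneg : 0 ≤ Real.exp (-F x) * (g x + C) :=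
    le_of_tendsto hlim <| (eventually_ge_atTop x).mono fun t ht =>
      hanti self_mem_Ici (mem_Ici.2 ht) ht
  linarith [nonneg_of_mul_nonneg_right hnonneg (Real.exp_pos _)]

theorem abs_le_of_hasDerivAt_of_tendsto {F q g b : ℝ → ℝ} {x C : ℝ}
    (hF : ∀ t, HasDerivAt F (q t) t) (hg : ∀ t, HasDerivAt g (q t * g t + b t) t)
    (hq : ∀ t, x ≤ t → 1 ≤ q t) (hb : ∀ t, x ≤ t → |b t| ≤ C)
    (hFtop : Tendsto F atTop atTop)
    (hu : Tendsto (fun t => Real.exp (-F t) * g t) atTop (𝓝 0)) : |g x| ≤ C := by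
  have hC : 0 ≤ C := (abs_nonneg _).trans (hb x le_rfl)
  have hlower := neg_le_of_hasDerivAt_of_tendsto hF hg hC hq
    (fun t ht => (le_abs_self _).trans (hb t ht)) hFtop hu
  have hupper := neg_le_of_hasDerivAt_of_tendsto (g := fun t => -g t) (b := fun t => -b t) hF
    (fun t => by
      convert! (hg t).neg using 1
      ring)
    hC hq (fun t ht => (neg_le_abs _).trans (hb t ht)) hFtop (by simpa using hu.neg)
  exact abs_le.2 ⟨hlower, by linarith⟩

theorem hasDerivAt_quadratic (τ σ κ x : ℝ) :
    HasDerivAt (fun x : ℝ => τ / 2 * x ^ 2 + σ * x + κ) (τ * x + σ) x := by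
  convert! ((((hasDerivAt_id x).pow 2).const_mul (τ / 2)).add
    ((hasDerivAt_id x).const_mul σ)).add_const κ using 1
  simp
  ring

theorem tendsto_quadratic_atTop {τ : ℝ} (hτ : 0 < τ) (σ κ : ℝ) :
    Tendsto (fun x : ℝ => τ / 2 * x ^ 2 + σ * x + κ) atTop atTop := by
  have h : Tendsto (fun x : ℝ => x * (τ / 2 * x + σ) + κ) atTop atTop :=
    tendsto_atTop_add_const_right _ _ <| tendsto_id.atTop_mul_atTop₀ <|
      tendsto_atTop_add_const_right _ _ <| tendsto_id.const_mul_atTop (half_pos hτ)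
  exact h.congr fun x => by ring

/-- Polynomial decay near `+∞` of a solution of the twisted equation that is negligible against
the growing Gaussian. -/
theorem exists_forall_ge_pow_mul_abs_le {τ σ κ : ℝ} (hτ : 0 < τ) {g b : ℝ → ℝ}
    (hg : ∀ t, HasDerivAt g ((τ * t + σ) * g t + b t) t) (hb : RapidDecay b)
    (hu : Tendsto (fun t => Real.exp (-(τ / 2 * t ^ 2 + σ * t + κ)) * g t) atTop (𝓝 0)) (k : ℕ) :
    ∃ R C : ℝ, ∀ x, R ≤ x → |x| ^ k * |g x| ≤ C := by
  obtain ⟨C, hC⟩ := hb k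
  refine ⟨max 1 ((1 - σ) / τ), C, fun x hx => ?_⟩
  have hx₁ : 1 ≤ x := (le_max_left _ _).trans hx
  have hxpow : 0 < x ^ k := pow_pos (by linarith) k
  have hbound : |g x| ≤ C / x ^ k := by
    refine abs_le_of_hasDerivAt_of_tendsto (hasDerivAt_quadratic τ σ κ) hg (fun t ht => ?_)
      (fun t ht => ?_) (tendsto_quadratic_atTop hτ σ κ) hu
    · have := (div_le_iff₀ hτ).1 (((le_max_right _ _).trans hx).trans ht)
      linarith
    · rw [le_div_iff₀ hxpow, mul_comm]
      refine le_trans ?_ (hC t)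
      rw [abs_of_nonneg (by linarith : 0 ≤ t)]
      gcongr
  rw [abs_of_nonneg (by linarith : 0 ≤ x), mul_comm]
  exact (le_div_iff₀ hxpow).1 hbound

theorem rapidDecay_of_hasDerivAt {τ σ κ : ℝ} (hτ : 0 < τ) {g b : ℝ → ℝ}
    (hg : ∀ t, HasDerivAt g ((τ * t + σ) * g t + b t) t) (hb : RapidDecay b)
    (htop : Tendsto (fun t => Real.exp (-(τ / 2 * t ^ 2 + σ * t + κ)) * g t) atTop (𝓝 0))
    (hbot : Tendsto (fun t => Real.exp (-(τ / 2 * t ^ 2 + σ * t + κ)) * g t) atBot (𝓝 0)) :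
    RapidDecay g := by
  intro k
  obtain ⟨R, C, hR⟩ := exists_forall_ge_pow_mul_abs_le hτ hg hb htop k
  obtain ⟨S, D, hS⟩ := exists_forall_ge_pow_mul_abs_le (τ := τ) (σ := -σ) (κ := κ)
    (g := fun t => g (-t)) (b := fun t => -b (-t)) hτ
    (fun t => by
      convert! (hg (-t)).scomp t (hasDerivAt_neg t) using 1
      simp
      ring)
    (fun k => (hb k).imp fun C hC x => by simpa using hC (-x))
    (by
      refine (hbot.comp tendsto_neg_atTop_atBot).congr fun t => ?_
      simp) k
  have hcont : Continuous fun x => |x| ^ k * |g x| :=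
    (continuous_abs.pow k).mul
      (continuous_iff_continuousAt.2 fun x => (hg x).continuousAt).abs
  obtain ⟨M, hM⟩ := (isCompact_Icc (a := -S) (b := R)).bddAbove_image hcont.continuousOn
  refine ⟨max M (max C D), fun x => ?_⟩
  rcases le_total R x with hx | hx
  · exact (hR x hx).trans ((le_max_left _ _).trans (le_max_right _ _))
  rcases le_total x (-S) with hx' | hx'
  · have := hS (-x) (by linarith)
    simp only [abs_neg, neg_neg] at this
    exact this.trans ((le_max_right _ _).trans (le_max_right _ _))
  · exact (hM (mem_image_of_mem _ ⟨hx', hx⟩)).trans (le_max_left _ _)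

theorem contDiff_of_hasDerivAt_affine_mul_add {τ σ : ℝ} {g b : ℝ → ℝ}
    (hg : ∀ t, HasDerivAt g ((τ * t + σ) * g t + b t) t) (hb : ContDiff ℝ ∞ b) :
    ContDiff ℝ ∞ g := by
  refine contDiff_infty.2 fun n => ?_
  induction n with
  | zero =>
    exact contDiff_zero.2 (continuous_iff_continuousAt.2 fun x => (hg x).continuousAt)
  | succ n ih =>
    push_cast
    refine contDiff_succ_iff_deriv.2 ⟨fun x => (hg x).differentiableAt, by simp, ?_⟩
    rw [funext fun x => (hg x).deriv]
    have hbn : ContDiff ℝ n b := contDiff_infty.1 hb n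
    fun_prop

theorem iteratedDeriv_succ_of_hasDerivAt {τ σ : ℝ} {g b : ℝ → ℝ}
    (hg : ∀ t, HasDerivAt g ((τ * t + σ) * g t + b t) t) (hb : ContDiff ℝ ∞ b) (n : ℕ) (x : ℝ) :
    iteratedDeriv (n + 1) g x = (τ * x + σ) * iteratedDeriv n g x +
      (n * τ) * iteratedDeriv (n - 1) g x + iteratedDeriv n b x := by
  have hsmooth := contDiff_of_hasDerivAt_affine_mul_add hg hb
  have hiter {h : ℝ → ℝ} (hh : ContDiff ℝ ∞ h) (m : ℕ) (x : ℝ) :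
      HasDerivAt (iteratedDeriv m h) (iteratedDeriv (m + 1) h x) x := by
    rw [iteratedDeriv_succ]
    exact (hh.differentiable_iteratedDeriv m
      (mod_cast ENat.natCast_lt_top m)).differentiableAt.hasDerivAt
  induction n generalizing x with
  | zero => simp [(hg x).deriv]
  | succ n ih =>
    have haff : HasDerivAt (fun x : ℝ => τ * x + σ) τ x := by
      simpa using ((hasDerivAt_id x).const_mul τ).add_const σ
    have hlower : HasDerivAt (fun x => (n * τ) * iteratedDeriv (n - 1) g x)
        ((n * τ) * iteratedDeriv n g x) x := by
      cases n with
      | zero => simpa using hasDerivAt_const x (0 : ℝ)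
      | succ m => exact (hiter hsmooth m x).const_mul _
    have hsum := ((haff.mul (hiter hsmooth n x)).add hlower).add (hiter hb n x)
    have heq : iteratedDeriv (n + 1) g = fun x => (τ * x + σ) * iteratedDeriv n g x +
        (n * τ) * iteratedDeriv (n - 1) g x + iteratedDeriv n b x := funext ih
    calc iteratedDeriv (n + 1 + 1) g x = deriv (iteratedDeriv (n + 1) g) x := by
          rw [iteratedDeriv_succ]
      _ = τ * iteratedDeriv n g x + (τ * x + σ) * iteratedDeriv (n + 1) g x +
            (n * τ) * iteratedDeriv n g x + iteratedDeriv (n + 1) b x := by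
          conv_lhs => rw [heq]
          exact hsum.deriv
      _ = _ := by
          push_cast
          ring

theorem rapidDecay_iteratedDeriv_of_hasDerivAt {τ σ : ℝ} {g : ℝ → ℝ} {β : SchwartzMap ℝ ℝ}
    (hg : ∀ t, HasDerivAt g ((τ * t + σ) * g t + β t) t) (hdecay : RapidDecay g) (n : ℕ) :
    RapidDecay (iteratedDeriv n g) := by
  induction n using Nat.strong_induction_on with
  | _ n ih =>
    cases n with
    | zero => simpa using hdecay
    | succ n =>
      rw [funext (iteratedDeriv_succ_of_hasDerivAt hg β.smooth' n)]
      exact (((ih n (by lia)).affine_mul τ σ).add ((ih (n - 1) (by lia)).const_mul _)).add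
        (β.rapidDecay_iteratedDeriv n)

theorem integrable_exp_neg_quadratic_mul {τ : ℝ} (hτ : 0 < τ) (σ κ : ℝ) {g : ℝ → ℝ}
    (hg : Integrable g) :
    Integrable fun t : ℝ => Real.exp (-(τ / 2 * t ^ 2 + σ * t + κ)) * g t := by
  refine hg.bdd_mul (c := Real.exp (σ ^ 2 / (2 * τ) - κ))
    (by fun_prop) (Eventually.of_forall fun t => ?_)
  rw [Real.norm_of_nonneg (Real.exp_pos _).le, Real.exp_le_exp]
  have hsq : τ / 2 * t ^ 2 + σ * t + σ ^ 2 / (2 * τ) = (τ * t + σ) ^ 2 / (2 * τ) := by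
    field_simp
    ring
  have : 0 ≤ (τ * t + σ) ^ 2 / (2 * τ) := by positivity
  linarith

theorem integral_exp_neg_quadratic_mul_eq_zero {τ : ℝ} (hτ : 0 < τ) (σ κ : ℝ)
    {α β : SchwartzMap ℝ ℝ} (h : ∀ x : ℝ, deriv (⇑α) x - (τ * x + σ) * α x = β x) :
    ∫ t : ℝ, Real.exp (-(τ / 2 * t ^ 2 + σ * t + κ)) * β t = 0 := by
  refine integral_eq_zero_of_hasDerivAt_of_integrable (fun x => ?_)
    (integrable_exp_neg_quadratic_mul hτ σ κ β.integrable)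
    (integrable_exp_neg_quadratic_mul hτ σ κ α.integrable)
  convert! (hasDerivAt_quadratic τ σ κ x).neg.exp.mul (α.differentiableAt (x := x)).hasDerivAt
    using 1
  rw [← h x]
  simp only [Pi.neg_apply]
  ring

/-- The primitive of an integrable continuous function of vanishing integral that vanishes at
both ends of the line. -/
theorem exists_hasDerivAt_tendsto_zero {w : ℝ → ℝ} (hw : Continuous w) (hint : Integrable w)
    (hzero : ∫ t, w t = 0) :
    ∃ u : ℝ → ℝ, (∀ x, HasDerivAt u (w x) x) ∧ Tendsto u atTop (𝓝 0) ∧ Tendsto u atBot (𝓝 0) := by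
  refine ⟨fun x => (∫ t in (0 : ℝ)..x, w t) + ∫ t in Iic (0 : ℝ), w t, fun x => ?_, ?_, ?_⟩
  · exact (hw.integral_hasStrictDerivAt 0 x).hasDerivAt.add_const _
  · have h := (intervalIntegral_tendsto_integral_Ioi 0 hint.integrableOn tendsto_id).add_const
      (∫ t in Iic (0 : ℝ), w t)
    rwa [add_comm (∫ t in Ioi (0 : ℝ), w t),
      intervalIntegral.integral_Iic_add_Ioi hint.integrableOn hint.integrableOn, hzero] at h
  · have h := (intervalIntegral_tendsto_integral_Iic 0 hint.integrableOn tendsto_id).neg.add_const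
      (∫ t in Iic (0 : ℝ), w t)
    rw [neg_add_cancel] at h
    refine h.congr fun x => ?_
    rw [intervalIntegral.integral_symm x 0, id]

theorem exists_schwartzMap_deriv_sub_eq {τ : ℝ} (hτ : 0 < τ) (σ κ : ℝ) (β : SchwartzMap ℝ ℝ)
    (hzero : ∫ t : ℝ, Real.exp (-(τ / 2 * t ^ 2 + σ * t + κ)) * β t = 0) :
    ∃ α : SchwartzMap ℝ ℝ, ∀ x : ℝ, deriv (⇑α) x - (τ * x + σ) * α x = β x := by
  obtain ⟨u, hu, htop, hbot⟩ := exists_hasDerivAt_tendsto_zero (by fun_prop)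
    (integrable_exp_neg_quadratic_mul hτ σ κ β.integrable) hzero
  have hcancel (x y : ℝ) : Real.exp (-x) * (Real.exp x * y) = y := by
    rw [← mul_assoc, ← Real.exp_add]
    simp
  have hcancel' (x y : ℝ) : Real.exp x * (Real.exp (-x) * y) = y := by
    simpa using hcancel (-x) y
  let g : ℝ → ℝ := fun x => Real.exp (τ / 2 * x ^ 2 + σ * x + κ) * u x
  have hg (x : ℝ) : HasDerivAt g ((τ * x + σ) * g x + β x) x := by
    convert! (hasDerivAt_quadratic τ σ κ x).exp.mul (hu x) using 1
    rw [hcancel']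
    simp only [g]
    ring
  have hdecay : RapidDecay g :=
    rapidDecay_of_hasDerivAt (κ := κ) hτ hg
      (by simpa using β.rapidDecay_iteratedDeriv 0)
      (by simpa only [g, hcancel] using htop) (by simpa only [g, hcancel] using hbot)
  refine ⟨⟨g, contDiff_of_hasDerivAt_affine_mul_add hg β.smooth', fun k n => ?_⟩, fun x => ?_⟩
  · obtain ⟨C, hC⟩ := rapidDecay_iteratedDeriv_of_hasDerivAt hg hdecay n k
    refine ⟨C, fun x => ?_⟩
    simpa [norm_iteratedFDeriv_eq_norm_iteratedDeriv] using hC x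
  · change deriv g x - (τ * x + σ) * g x = β x
    rw [(hg x).deriv]
    ring

theorem exists_schwartzMap_integral_exp_neg_mul_eq {f : ℝ → ℝ} (hf : Continuous f) (r : ℝ) :
    ∃ β : SchwartzMap ℝ ℝ, ∫ t : ℝ, Real.exp (-(f t)) * β t = r := by
  let φ : ContDiffBump (0 : ℝ) := default
  let γ : SchwartzMap ℝ ℝ := φ.hasCompactSupport.toSchwartzMap φ.contDiff
  have hpos : 0 < ∫ t : ℝ, Real.exp (-(f t)) * γ t := by
    refine Continuous.integral_pos_of_hasCompactSupport_nonneg_nonzero (x := 0) (by fun_prop)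
      (φ.hasCompactSupport.mul_left (f := fun t => Real.exp (-(f t))))
      (fun t => mul_nonneg (Real.exp_pos _).le φ.nonneg) ?_
    exact mul_ne_zero (Real.exp_ne_zero _)
      (φ.pos_of_mem_ball (Metric.mem_ball_self φ.rOut_pos)).ne'
  refine ⟨(r / ∫ t : ℝ, Real.exp (-(f t)) * γ t) • γ, ?_⟩
  simp only [smul_apply, smul_eq_mul, mul_left_comm (Real.exp _), integral_const_mul]
  exact div_mul_cancel₀ r hpos.ne'

/-- For the quadratic `f(x) = (τ/2)x² + σx + κ` with `τ > 0` and β ∈ 𝒮,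
the equation `α′ − f′·α = β` has a Schwartz solution α iff `∫_ℝ e^{−f(t)}·β(t) dt = 0`.
Moreover the functional `β ↦ ∫ e^{−f}·β` is surjective onto ℝ, so it induces a linear
isomorphism `𝒮 / d_f(𝒮) ≅ ℝ`: the first cohomology of `(𝒮 → 𝒮, d_f)` is one-dimensional. -/
theorem range_twisted_differential (τ σ κ : ℝ) (hτ : 0 < τ) (f : ℝ → ℝ)
    (hf : ∀ x, f x = τ / 2 * x ^ 2 + σ * x + κ) :
    (∀ β : SchwartzMap ℝ ℝ,
      (∃ α : SchwartzMap ℝ ℝ,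
        ∀ x : ℝ, deriv (⇑α) x - (τ * x + σ) * α x = β x) ↔
        (∫ t : ℝ, Real.exp (-(f t)) * β t) = 0) ∧
    (∀ r : ℝ, ∃ β : SchwartzMap ℝ ℝ, (∫ t : ℝ, Real.exp (-(f t)) * β t) = r) := by
  obtain rfl : f = fun x => τ / 2 * x ^ 2 + σ * x + κ := funext hf
  exact ⟨fun β => ⟨fun ⟨_, hα⟩ => integral_exp_neg_quadratic_mul_eq_zero hτ σ κ hα,
    exists_schwartzMap_deriv_sub_eq hτ σ κ β⟩,
    exists_schwartzMap_integral_exp_neg_mul_eq (by fun_prop)⟩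
end

section
/- Let L_a, L_b, L_c be three lines in ℝ² with slopes t_a < t_b < t_c that do not all pass through one point. Let A denote the area of the triangle with vertices v_{ab}, v_{bc}, v_{ac} (the 2-dimensional Lebesgue measure of the convex hull of these three points). Then A = f_{ab}(x_{ab}) + f_{bc}(x_{bc}) − f_{ac}(x_{ac}), and consequently, for every x ∈ ℝ, e^{f_{ab}(x) − f_{ab}(x_{ab})} · e^{f_{bc}(x) − f_{bc}(x_{bc})} = e^{−A} · e^{f_{ac}(x) − f_{ac}(x_{ac})}; i.e. the pointwise product of the normalized Gaussian generators satisfies 𝐞_{ab} · 𝐞_{bc} = e^{−A} · 𝐞_{ac}. -/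
open MeasureTheory

/-- The convex hull of the origin and the two standard basis vectors of the plane. -/
theorem convexHull_standard_triangle :
    convexHull ℝ ({(0, 0), (1, 0), (0, 1)} : Set (ℝ × ℝ)) =
      {p : ℝ × ℝ | 0 ≤ p.1 ∧ 0 ≤ p.2 ∧ p.1 + p.2 ≤ 1} := by
  apply Set.Subset.antisymm
  · refine convexHull_min ?_ ?_
    · rintro p (rfl | rfl | rfl) <;> norm_num
    · rintro ⟨x₁, y₁⟩ ⟨hx₁, hy₁, h₁⟩ ⟨x₂, y₂⟩ ⟨hx₂, hy₂, h₂⟩ a b ha hb hab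
      simp only [Set.mem_ofPred_eq, Prod.smul_mk, Prod.mk_add_mk, smul_eq_mul] at *
      refine ⟨by positivity, by positivity, ?_⟩
      nlinarith [mul_le_mul_of_nonneg_left h₁ ha, mul_le_mul_of_nonneg_left h₂ hb]
  · rintro ⟨x, y⟩ ⟨hx, hy, hxy⟩
    simp only at hx hy hxy
    rw [convexHull_insert (by simp), convexHull_pair, mem_convexJoin]
    rcases eq_or_lt_of_le (add_nonneg hx hy) with h | h
    · obtain rfl : x = 0 := by linarith
      obtain rfl : y = 0 := by linarith
      exact ⟨(0, 0), rfl, (1, 0), left_mem_segment _ _ _, left_mem_segment _ _ _⟩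
    · refine ⟨(0, 0), rfl, (x / (x + y), y / (x + y)), ⟨x / (x + y), y / (x + y), by positivity,
        by positivity, by field_simp, by simp⟩, ⟨1 - (x + y), x + y, by linarith, h.le, by ring, ?_⟩⟩
      ext <;> simp <;> field_simp

/-- The standard triangle has area `1 / 2`. -/
theorem volume_standard_triangle :
    volume (convexHull ℝ ({(0, 0), (1, 0), (0, 1)} : Set (ℝ × ℝ))) = ENNReal.ofReal (1 / 2) := by
  have hmeas : MeasurableSet {p : ℝ × ℝ | 0 ≤ p.1 ∧ 0 ≤ p.2 ∧ p.1 + p.2 ≤ 1} := by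
    apply IsClosed.measurableSet
    exact (isClosed_le continuous_const continuous_fst).inter
      ((isClosed_le continuous_const continuous_snd).inter
        (isClosed_le (continuous_fst.add continuous_snd) continuous_const))
  have hfiber (x : ℝ) :
      volume (Prod.mk x ⁻¹' {p : ℝ × ℝ | 0 ≤ p.1 ∧ 0 ≤ p.2 ∧ p.1 + p.2 ≤ 1}) =
        (Set.Icc (0 : ℝ) 1).indicator (fun x => ENNReal.ofReal (1 - x)) x := by
    by_cases hx : x ∈ Set.Icc (0 : ℝ) 1
    · rw [Set.indicator_of_mem hx, ← sub_zero (1 - x), ← Real.volume_Icc]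
      congr 1
      ext y
      simp [hx.1, le_sub_iff_add_le']
    · rw [Set.indicator_of_notMem hx, ← measure_empty (μ := (volume : Measure ℝ))]
      congr 1
      ext y
      simp only [Set.mem_preimage, Set.mem_ofPred_eq, Set.mem_empty_iff_false, iff_false]
      rintro ⟨h₀, h₁, h₂⟩
      exact hx ⟨h₀, by linarith⟩
  rw [convexHull_standard_triangle, Measure.volume_eq_prod, Measure.prod_apply hmeas]
  simp_rw [hfiber]
  rw [lintegral_indicator measurableSet_Icc, ← ofReal_integral_eq_lintegral_ofReal]
  · rw [integral_Icc_eq_integral_Ioc, ← intervalIntegral.integral_of_le zero_le_one,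
      intervalIntegral.integral_sub (by simp) (by simp), integral_id]
    norm_num
  · exact (continuous_const.sub continuous_id).integrableOn_Icc
  · filter_upwards [ae_restrict_mem measurableSet_Icc] with x hx
    exact sub_nonneg.mpr hx.2

/-- The shoelace formula for the area of a triangle in the plane. -/
theorem volume_convexHull_triangle (p q r : ℝ × ℝ) :
    volume (convexHull ℝ ({p, q, r} : Set (ℝ × ℝ))) =
      ENNReal.ofReal (|(q.1 - p.1) * (r.2 - p.2) - (r.1 - p.1) * (q.2 - p.2)| / 2) := by
  let f : ℝ × ℝ →ₗ[ℝ] ℝ × ℝ := Matrix.toLin (Module.Basis.finTwoProd ℝ) (Module.Basis.finTwoProd ℝ)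
    !![q.1 - p.1, r.1 - p.1; q.2 - p.2, r.2 - p.2]
  have himage : ({p, q, r} : Set (ℝ × ℝ)) =
      (fun x => p + x) '' (f '' {(0, 0), (1, 0), (0, 1)}) := by
    simp [Set.image_insert_eq, f, Matrix.toLin_finTwoProd_apply, Prod.add_def]
  have hhull : convexHull ℝ ({p, q, r} : Set (ℝ × ℝ)) =
      (fun x => p + x) '' (f '' convexHull ℝ {(0, 0), (1, 0), (0, 1)}) := by
    rw [himage, f.image_convexHull]
    exact convexHull_vadd p _
  rw [hhull, Set.image_add_left, measure_preimage_add, Measure.addHaar_image_linearMap,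
    volume_standard_triangle, ← ENNReal.ofReal_mul (abs_nonneg _), LinearMap.det_toLin,
    Matrix.det_fin_two_of, mul_one_div]

/-- For three lines `L_p : y = t_p·x + s_p` with slopes `ta < tb < tc`,
not all through one point, the area `A` of the triangle with vertices the pairwise
intersection points equals `fab(xab) + fbc(xbc) − fac(xac)`, and consequently the
normalized Gaussian generators satisfy `𝐞_{ab} · 𝐞_{bc} = e^{−A} · 𝐞_{ac}` pointwise. -/
theorem triangle_area_gaussian_product (ta tb tc sa sb sc : ℝ)
    (hab : ta < tb) (hbc : tb < tc)
    (hnc : ¬ ∃ x : ℝ, ta * x + sa = tb * x + sb ∧ tb * x + sb = tc * x + sc) :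
    let fab : ℝ → ℝ := fun x => (ta - tb) / 2 * x ^ 2 + (sa - sb) * x
    let fbc : ℝ → ℝ := fun x => (tb - tc) / 2 * x ^ 2 + (sb - sc) * x
    let fac : ℝ → ℝ := fun x => (ta - tc) / 2 * x ^ 2 + (sa - sc) * x
    let xab : ℝ := (sb - sa) / (ta - tb)
    let xbc : ℝ := (sc - sb) / (tb - tc)
    let xac : ℝ := (sc - sa) / (ta - tc)
    let vab : ℝ × ℝ := (xab, ta * xab + sa)
    let vbc : ℝ × ℝ := (xbc, tb * xbc + sb)
    let vac : ℝ × ℝ := (xac, ta * xac + sa)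
    let A : ℝ := (volume (convexHull ℝ ({vab, vbc, vac} : Set (ℝ × ℝ)))).toReal
    A = fab xab + fbc xbc - fac xac ∧
      ∀ x : ℝ,
        Real.exp (fab x - fab xab) * Real.exp (fbc x - fbc xbc)
          = Real.exp (-A) * Real.exp (fac x - fac xac) := by
  intro fab fbc fac xab xbc xac vab vbc vac A
  have hA : A = fab xab + fbc xbc - fac xac := by
    have h₁ : ta - tb ≠ 0 := by linarith
    have h₂ : tb - tc ≠ 0 := by linarith
    have h₃ : ta - tc ≠ 0 := by linarith
    have hybc : tb * xbc + sb - (ta * xab + sa) = tb * (xbc - xab) := by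
      simp only [xab]
      field_simp
      ring
    have hxac : xac - xab = (tb - tc) / (ta - tc) * (xbc - xab) := by
      simp only [xab, xbc, xac]
      field_simp
      ring
    have hweight : 0 < (tb - tc) / (ta - tc) := div_pos_of_neg_of_neg (by linarith) (by linarith)
    have hdet : (xbc - xab) * (ta * xac + sa - (ta * xab + sa)) -
        (xac - xab) * (tb * xbc + sb - (ta * xab + sa)) =
          -((tb - ta) * ((tb - tc) / (ta - tc)) * (xbc - xab) ^ 2) := by
      rw [hybc, add_sub_add_right_eq_sub, ← mul_sub, hxac]
      ring
    have hnonneg : 0 ≤ (tb - ta) * ((tb - tc) / (ta - tc)) * (xbc - xab) ^ 2 :=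
      mul_nonneg (mul_nonneg (sub_nonneg.mpr hab.le) hweight.le) (sq_nonneg _)
    simp only [A, vab, vbc, vac]
    rw [volume_convexHull_triangle, ENNReal.toReal_ofReal (by positivity), hdet, abs_neg,
      abs_of_nonneg hnonneg]
    simp only [fab, fbc, fac, xab, xbc, xac]
    field_simp
    ring
  refine ⟨hA, fun x => ?_⟩
  rw [← Real.exp_add, ← Real.exp_add, hA]
  congr 1
  simp only [fab, fbc, fac]
  ring
end

section
/- Let m ≥ 3 and let w₁, …, w_m ∈ ℝ² be points in strictly convex position in clockwise order, with indices read cyclically mod m, and assume no edge of the polygon is vertical: the x-coordinates of w_i and w_{i+1} differ for every i. Then there is a unique index p such that x(w_p) is strictly smaller than x(w_j) for all j ≠ p, and a unique index q such that x(w_q) is strictly larger than x(w_j) for all j ≠ q; p ≠ q; and for every index i, slope(w_i − w_{i−1}) < slope(w_{i+1} − w_i) holds if and only if i ∈ {p, q}. In particular, exactly two vertices of a clockwise convex polygon satisfy the slope-ascent condition, and they are the x-extremal vertices. -/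
/-- In a clockwise convex polygon every other vertex lies strictly to the right of each edge,
the closing edge included. -/
theorem edge_det_neg {m : ℕ} (hm : 3 ≤ m) [NeZero m] {w : Fin m → ℝ × ℝ}
    (hconv : ∀ i j k : Fin m, i < j → j < k →
      (w j - w i).1 * (w k - w i).2 - (w j - w i).2 * (w k - w i).1 < 0)
    {i j : Fin m} (hji : j ≠ i) (hji' : j ≠ i + 1) :
    (w (i + 1) - w i).1 * (w j - w i).2 - (w (i + 1) - w i).2 * (w j - w i).1 < 0 := by
  have hone : ((1 : Fin m) : ℕ) = 1 := by
    rw [Fin.val_one', Nat.mod_eq_of_lt (by omega)]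
  have hval := Fin.val_add i 1
  rw [hone] at hval
  have h₁ : (j : ℕ) ≠ i := fun h => hji (Fin.ext h)
  have h₂ : (j : ℕ) ≠ (i + 1 : Fin m) := fun h => hji' (Fin.ext h)
  have hi := i.isLt
  have hj := j.isLt
  rcases Nat.lt_or_ge (i + 1 : ℕ) m with h | h
  · rw [Nat.mod_eq_of_lt h] at hval
    rcases Nat.lt_or_ge j i with hlt | hge
    · have := hconv j i (i + 1) (Fin.lt_def.2 hlt) (Fin.lt_def.2 (by omega))
      simp only [Prod.fst_sub, Prod.snd_sub] at this ⊢
      linarith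
    · exact hconv i (i + 1) j (Fin.lt_def.2 (by omega)) (Fin.lt_def.2 (by omega))
  · have hlast : (i : ℕ) + 1 = m := by omega
    rw [hlast, Nat.mod_self] at hval
    have := hconv (i + 1) j i (Fin.lt_def.2 (by omega)) (Fin.lt_def.2 (by omega))
    simp only [Prod.fst_sub, Prod.snd_sub] at this ⊢
    linarith

theorem Fin.one_ne_zero_of_three_le {m : ℕ} (hm : 3 ≤ m) [NeZero m] : (1 : Fin m) ≠ 0 := by
  simp only [ne_eq, Fin.ext_iff, Fin.val_one', Fin.val_zero]
  rw [Nat.mod_eq_of_lt (by omega)]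
  omega

theorem Fin.sub_one_ne_self {m : ℕ} (hm : 3 ≤ m) [NeZero m] (i : Fin m) : i - 1 ≠ i :=
  fun h => Fin.one_ne_zero_of_three_le hm (sub_eq_self.1 h)

theorem Fin.add_one_ne_self {m : ℕ} (hm : 3 ≤ m) [NeZero m] (i : Fin m) : i + 1 ≠ i :=
  fun h => Fin.one_ne_zero_of_three_le hm (add_eq_left.1 h)

theorem Fin.sub_one_ne_add_one {m : ℕ} (hm : 3 ≤ m) [NeZero m] (i : Fin m) :
    i - 1 ≠ i + 1 := by
  intro h
  have h₂ : (1 : Fin m) + 1 = 0 := by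
    have : i + (1 + 1) = i := by rw [← add_assoc, ← h, sub_add_cancel]
    exact add_eq_left.1 this
  have h₃ := congrArg Fin.val h₂
  rw [Fin.val_add, Fin.val_one', Nat.mod_eq_of_lt (show 1 < m by omega),
    Nat.mod_eq_of_lt (by omega), Fin.val_zero] at h₃
  omega

/-- A local strict minimum of the first coordinate on a clockwise convex polygon is a global
strict minimum. -/
theorem fst_lt_of_local_min {m : ℕ} (hm : 3 ≤ m) [NeZero m] {w : Fin m → ℝ × ℝ}
    (hconv : ∀ i j k : Fin m, i < j → j < k →
      (w j - w i).1 * (w k - w i).2 - (w j - w i).2 * (w k - w i).1 < 0)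
    {i : Fin m} (hsucc : (w i).1 < (w (i + 1)).1) (hpred : (w i).1 < (w (i - 1)).1)
    {j : Fin m} (hj : j ≠ i) : (w i).1 < (w j).1 := by
  by_cases hj₁ : j = i + 1
  · rwa [hj₁]
  by_cases hj₂ : j = i - 1
  · rwa [hj₂]
  have hout := edge_det_neg hm hconv hj hj₁
  have hin := edge_det_neg hm hconv hj₂ (by rwa [sub_add_cancel])
  have hcorner := edge_det_neg hm hconv (Fin.sub_one_ne_self hm i) (Fin.sub_one_ne_add_one hm i)
  rw [sub_add_cancel] at hin
  simp only [Prod.fst_sub, Prod.snd_sub] at hout hin hcorner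
  by_contra! hle
  have h₁ := mul_pos_of_neg_of_neg hout (sub_neg.2 hpred)
  have h₂ := mul_pos_of_neg_of_neg hin (sub_neg.2 hsucc)
  have h₃ := mul_nonneg_of_nonpos_of_nonpos hcorner.le (sub_nonpos.2 hle)
  linarith

theorem fst_lt_of_local_max {m : ℕ} (hm : 3 ≤ m) [NeZero m] {w : Fin m → ℝ × ℝ}
    (hconv : ∀ i j k : Fin m, i < j → j < k →
      (w j - w i).1 * (w k - w i).2 - (w j - w i).2 * (w k - w i).1 < 0)
    {i : Fin m} (hsucc : (w (i + 1)).1 < (w i).1) (hpred : (w (i - 1)).1 < (w i).1)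
    {j : Fin m} (hj : j ≠ i) : (w j).1 < (w i).1 := by
  have hneg : ∀ i j k : Fin m, i < j → j < k →
      (-w j - -w i).1 * (-w k - -w i).2 - (-w j - -w i).2 * (-w k - -w i).1 < 0 := by
    intro i j k hij hjk
    have := hconv i j k hij hjk
    simp only [Prod.fst_sub, Prod.snd_sub, Prod.fst_neg, Prod.snd_neg] at this ⊢
    linarith
  simpa using fst_lt_of_local_min (w := fun i => -w i) hm hneg
    (by simpa using hsucc) (by simpa using hpred) hj

/-- At a clockwise turn with no vertical edge the slope increases exactly when the horizontal
direction reverses. -/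
theorem slope_lt_iff_mul_neg {a b c d : ℝ} (ha : a ≠ 0) (hc : c ≠ 0) (hdet : a * d - b * c < 0) :
    b / a < d / c ↔ a * c < 0 := by
  have hsub : d / c - b / a = (a * d - b * c) / (a * c) := by
    field_simp
  rw [← sub_pos, hsub, div_pos_iff]
  constructor
  · rintro (h | h)
    · exact absurd h.1 hdet.not_gt
    · exact h.2
  · exact fun h => Or.inr ⟨hdet, h⟩

/-- Let `w₁, …, w_m` (m ≥ 3, indices cyclic mod m) be points of ℝ² in
strictly convex position in clockwise order (`det(w_j − w_i, w_k − w_i) < 0` for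
`i < j < k`), with no vertical edge. Then there is a unique index `p` with strictly
minimal x-coordinate and a unique index `q` with strictly maximal x-coordinate,
`p ≠ q`, and for every `i` the slope-ascent condition
`slope(w_i − w_{i−1}) < slope(w_{i+1} − w_i)` holds iff `i ∈ {p, q}`. -/
theorem cc_polygon_degree_count (m : ℕ) (hm : 3 ≤ m) [NeZero m]
    (w : Fin m → ℝ × ℝ)
    (hconv : ∀ i j k : Fin m, i < j → j < k →
      (w j - w i).1 * (w k - w i).2 - (w j - w i).2 * (w k - w i).1 < 0)
    (hvert : ∀ i : Fin m, (w (i + 1)).1 ≠ (w i).1) :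
    (∃! p : Fin m, ∀ j : Fin m, j ≠ p → (w p).1 < (w j).1) ∧
    (∃! q : Fin m, ∀ j : Fin m, j ≠ q → (w j).1 < (w q).1) ∧
    (∀ p q : Fin m,
      (∀ j : Fin m, j ≠ p → (w p).1 < (w j).1) →
      (∀ j : Fin m, j ≠ q → (w j).1 < (w q).1) →
      p ≠ q ∧
        ∀ i : Fin m,
          (((w i).2 - (w (i - 1)).2) / ((w i).1 - (w (i - 1)).1)
              < ((w (i + 1)).2 - (w i).2) / ((w (i + 1)).1 - (w i).1)
            ↔ (i = p ∨ i = q))) := by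
  have hpred : ∀ i : Fin m, (w i).1 ≠ (w (i - 1)).1 := fun i => by
    simpa using hvert (i - 1)
  refine ⟨?_, ?_, ?_⟩
  · obtain ⟨p, hp⟩ := Finite.exists_min fun i => (w i).1
    refine ⟨p, fun j hj => fst_lt_of_local_min hm hconv ((hp _).lt_of_ne (hvert p).symm)
      ((hp _).lt_of_ne (hpred p)) hj, fun p' hp' => ?_⟩
    by_contra hne
    exact (hp' p (Ne.symm hne)).not_ge (hp p')
  · obtain ⟨q, hq⟩ := Finite.exists_max fun i => (w i).1
    refine ⟨q, fun j hj => fst_lt_of_local_max hm hconv ((hq _).lt_of_ne (hvert q))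
      ((hq _).lt_of_ne (hpred q).symm) hj, fun q' hq' => ?_⟩
    by_contra hne
    exact (hq' q (Ne.symm hne)).not_ge (hq q')
  · intro p q hp hq
    refine ⟨?_, fun i => ?_⟩
    · rintro rfl
      have hne := Fin.add_one_ne_self hm p
      exact (hp _ hne).not_gt (hq _ hne)
    have hturn := edge_det_neg hm hconv (Fin.sub_one_ne_self hm i) (Fin.sub_one_ne_add_one hm i)
    simp only [Prod.fst_sub, Prod.snd_sub] at hturn
    rw [slope_lt_iff_mul_neg (sub_ne_zero.2 (hpred i)) (sub_ne_zero.2 (hvert i)) (by linarith),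
      mul_neg_iff]
    constructor
    · rintro (⟨h₁, h₂⟩ | ⟨h₁, h₂⟩)
      · right
        by_contra hne
        exact (hq i hne).not_gt
          (fst_lt_of_local_max hm hconv (sub_neg.1 h₂) (sub_pos.1 h₁) (Ne.symm hne))
      · left
        by_contra hne
        exact (hp i hne).not_gt
          (fst_lt_of_local_min hm hconv (sub_pos.1 h₂) (sub_neg.1 h₁) (Ne.symm hne))
    · rintro (rfl | rfl)
      · exact Or.inr ⟨sub_neg.2 (hp _ (Fin.sub_one_ne_self hm i)),
          sub_pos.2 (hp _ (Fin.add_one_ne_self hm i))⟩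
      · exact Or.inl ⟨sub_pos.2 (hq _ (Fin.sub_one_ne_self hm i)),
          sub_neg.2 (hq _ (Fin.add_one_ne_self hm i))⟩
end

section
/- Let m ≥ 3 and let L₁, …, L_m be lines L_i : y = t_i·x + s_i in ℝ² with t_i ≠ t_{i+1} for all i (indices read cyclically mod m). Let w_i denote the intersection point of L_i and L_{i+1}, let x_i be its x-coordinate, and set f_{i,i+1}(x) := ((t_i − t_{i+1})/2)·x² + (s_i − s_{i+1})·x. Assume the points w₁, …, w_m are pairwise distinct and in strictly convex position in clockwise order (so that the segment from w_{i−1} to w_i lies on L_i and they bound a clockwise convex polygon). Then the area of the polygon — the 2-dimensional Lebesgue measure of the convex hull of {w₁, …, w_m} — equals Σ_{i=1}^{m} f_{i,i+1}(x_i). -/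
open MeasureTheory

namespace PlanarPolygon

/-- Twice the signed area of the triangle `a b c`, positive when it is counterclockwise. -/
def orient (a b c : ℝ × ℝ) : ℝ :=
  (b - a).1 * (c - a).2 - (b - a).2 * (c - a).1

/-- The determinant of two plane vectors. -/
def cross (a b : ℝ × ℝ) : ℝ := a.1 * b.2 - a.2 * b.1

theorem orient_eq_cross (a b c : ℝ × ℝ) :
    orient a b c = cross a b + cross b c - cross a c := by
  simp only [orient, cross, Prod.fst_sub, Prod.snd_sub]
  ring

theorem convex_mem_of_three {K : Set (ℝ × ℝ)} (hK : Convex ℝ K) {a b c : ℝ × ℝ}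
    (ha : a ∈ K) (hb : b ∈ K) (hc : c ∈ K) {α β γ : ℝ} (hα : 0 ≤ α) (hβ : 0 ≤ β) (hγ : 0 ≤ γ)
    (h : α + β + γ = 1) : α • a + β • b + γ • c ∈ K := by
  have := hK.sum_mem (t := Finset.univ) (w := ![α, β, γ]) (z := ![a, b, c])
    (by intro i _; fin_cases i <;> simpa)
    (by simpa [Fin.sum_univ_three] using h)
    (by intro i _; fin_cases i <;> simpa)
  simpa [Fin.sum_univ_three] using this

/-- The triangle with vertices `0`, `(1, 0)` and `(0, 1)`. -/
def stdTriangle : Set (ℝ × ℝ) := {p | 0 ≤ p.1 ∧ 0 ≤ p.2 ∧ p.1 + p.2 ≤ 1}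

theorem convex_stdTriangle : Convex ℝ stdTriangle := by
  rintro p ⟨hp₁, hp₂, hp⟩ q ⟨hq₁, hq₂, hq⟩ a b ha hb hab
  simp only [stdTriangle, Set.mem_ofPred_eq, Prod.fst_add, Prod.snd_add, Prod.smul_fst,
    Prod.smul_snd, smul_eq_mul]
  refine ⟨by positivity, by positivity, ?_⟩
  nlinarith [mul_le_mul_of_nonneg_left hp ha, mul_le_mul_of_nonneg_left hq hb]

theorem volume_stdTriangle : volume stdTriangle = ENNReal.ofReal (1 / 2) := by
  have hmeas : MeasurableSet stdTriangle := by
    refine IsClosed.measurableSet ?_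
    exact (isClosed_le continuous_const continuous_fst).inter
      ((isClosed_le continuous_const continuous_snd).inter
        (isClosed_le (continuous_fst.add continuous_snd) continuous_const))
  have hslice : ∀ x : ℝ, volume (Prod.mk x ⁻¹' stdTriangle) =
      (Set.Icc (0 : ℝ) 1).indicator (fun x => ENNReal.ofReal (1 - x)) x := by
    intro x
    by_cases hx : x ∈ Set.Icc (0 : ℝ) 1
    · have : Prod.mk x ⁻¹' stdTriangle = Set.Icc 0 (1 - x) := by
        ext y
        simp only [stdTriangle, Set.mem_preimage, Set.mem_ofPred_eq, Set.mem_Icc]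
        exact ⟨fun h => ⟨h.2.1, by linarith⟩, fun h => ⟨hx.1, h.1, by linarith⟩⟩
      rw [this, Set.indicator_of_mem hx, Real.volume_Icc, sub_zero]
    · have : Prod.mk x ⁻¹' stdTriangle = ∅ := by
        ext y
        simp only [stdTriangle, Set.mem_preimage, Set.mem_ofPred_eq, Set.mem_empty_iff_false,
          iff_false]
        exact fun h => hx ⟨h.1, by linarith⟩
      rw [this, Set.indicator_of_notMem hx, measure_empty]
  rw [Measure.volume_eq_prod, Measure.prod_apply hmeas, lintegral_congr hslice,
    lintegral_indicator measurableSet_Icc, ← ofReal_integral_eq_lintegral_ofReal]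
  · rw [integral_Icc_eq_integral_Ioc, ← intervalIntegral.integral_of_le zero_le_one,
      intervalIntegral.integral_sub (by simp) (by simp)]
    norm_num
  · exact (continuous_const.sub continuous_id).integrableOn_Icc
  · filter_upwards [ae_restrict_mem measurableSet_Icc] with x hx
    simpa using hx.2

theorem volume_triangle (a b c : ℝ × ℝ) :
    volume (convexHull ℝ {a, b, c}) = ENNReal.ofReal (|orient a b c| / 2) := by
  let L : ℝ × ℝ →ₗ[ℝ] ℝ × ℝ := Matrix.toLin (Module.Basis.finTwoProd ℝ)
    (Module.Basis.finTwoProd ℝ)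
    !![(b - a).1, (c - a).1; (b - a).2, (c - a).2]
  have hL : ∀ p : ℝ × ℝ, L p = p.1 • (b - a) + p.2 • (c - a) := by
    intro p
    ext <;> simp [L, Matrix.toLin_finTwoProd_apply] <;> ring
  have hdet : LinearMap.det L = orient a b c := by
    rw [LinearMap.det_toLin, Matrix.det_fin_two_of, orient]
    ring
  have hhull : convexHull ℝ {a, b, c} = (fun x => a + x) '' (L '' stdTriangle) := by
    apply Set.Subset.antisymm
    · apply convexHull_min
      · rintro p (rfl | rfl | rfl)
        · exact ⟨0, ⟨0, by simp [stdTriangle], by simp⟩, by simp⟩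
        · exact ⟨p - a, ⟨(1, 0), by simp [stdTriangle], by simp [hL]⟩, by simp⟩
        · exact ⟨p - a, ⟨(0, 1), by simp [stdTriangle], by simp [hL]⟩, by simp⟩
      · exact (convex_stdTriangle.linear_image L).translate a
    · rintro _ ⟨_, ⟨p, ⟨h₁, h₂, h₃⟩, rfl⟩, rfl⟩
      have := convex_mem_of_three (convex_convexHull ℝ {a, b, c})
        (subset_convexHull ℝ _ (by simp : a ∈ ({a, b, c} : Set (ℝ × ℝ))))
        (subset_convexHull ℝ _ (by simp : b ∈ ({a, b, c} : Set (ℝ × ℝ))))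
        (subset_convexHull ℝ _ (by simp : c ∈ ({a, b, c} : Set (ℝ × ℝ))))
        (sub_nonneg.2 h₃) h₁ h₂ (by ring)
      convert this using 1
      simp only [hL]
      module
  rw [hhull, Set.image_add_left, measure_preimage_add, Measure.addHaar_image_linearMap, hdet,
    volume_stdTriangle, ← ENNReal.ofReal_mul (abs_nonneg _), mul_one_div]

theorem volume_line_eq_zero {a b : ℝ × ℝ} (hab : a ≠ b) :
    volume {p | orient a b p = 0} = 0 := by
  let S : AffineSubspace ℝ (ℝ × ℝ) :=
    { carrier := {p | orient a b p = 0}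
      smul_vsub_vadd_mem' := by
        intro r p q u hp hq hu
        simp only [orient, Set.mem_ofPred_eq, vsub_eq_sub, vadd_eq_add, Prod.fst_sub, Prod.snd_sub,
          Prod.fst_add, Prod.snd_add, Prod.smul_fst, Prod.smul_snd, smul_eq_mul] at *
        linear_combination r * hp - r * hq + hu }
  refine Measure.addHaar_affineSubspace volume S fun hS => hab ?_
  have h : ∀ p, orient a b p = 0 := fun p => by
    have : p ∈ S := hS ▸ AffineSubspace.mem_top ℝ _ p
    exact this
  have h₁ := h (a + (1, 0))
  have h₂ := h (a + (0, 1))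
  simp only [orient, add_sub_cancel_left, Prod.fst_sub, Prod.snd_sub] at h₁ h₂
  ext <;> linarith

theorem convex_orient_nonneg (a b : ℝ × ℝ) : Convex ℝ {p | 0 ≤ orient a b p} := by
  intro p hp q hq u v hu hv huv
  have : orient a b (u • p + v • q) = u * orient a b p + v * orient a b q := by
    simp only [orient, Prod.fst_sub, Prod.snd_sub, Prod.fst_add, Prod.snd_add, Prod.smul_fst,
      Prod.smul_snd, smul_eq_mul]
    linear_combination ((b.1 - a.1) * a.2 - (b.2 - a.2) * a.1) * huv
  simp only [Set.mem_ofPred_eq] at *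
  rw [this]
  positivity

theorem orient_rotate (a b c : ℝ × ℝ) : orient b c a = orient a b c := by
  simp only [orient, Prod.fst_sub, Prod.snd_sub]
  ring

theorem orient_swap (a b c : ℝ × ℝ) : orient b a c = -orient a b c := by
  simp only [orient, Prod.fst_sub, Prod.snd_sub]
  ring

/-- Barycentric coordinates of `q` with respect to `a`, `b`, `p`, denominators cleared. -/
theorem orient_smul_eq (a b p q : ℝ × ℝ) :
    orient a b p • q = orient b p q • a + orient p a q • b + orient a b q • p := by
  ext <;> simp only [orient, Prod.fst_sub, Prod.snd_sub, Prod.fst_add, Prod.snd_add,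
    Prod.smul_fst, Prod.smul_snd, smul_eq_mul] <;> ring

theorem orient_sum_eq (a b p q : ℝ × ℝ) :
    orient b p q + orient p a q + orient a b q = orient a b p := by
  simp only [orient, Prod.fst_sub, Prod.snd_sub]
  ring

/-- If `p` lies beyond the edge `a b` of the hull of `S`, and sees `S` through that edge, then
adding `p` to `S` glues the triangle `a b p` onto the hull. -/
theorem convexHull_insert_eq_union_triangle {S : Set (ℝ × ℝ)} {a b p : ℝ × ℝ} (ha : a ∈ S)
    (hb : b ∈ S) (hp : orient a b p < 0) (hS : ∀ q ∈ S, 0 ≤ orient a b q)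
    (hSa : ∀ q ∈ S, 0 ≤ orient a p q) (hSb : ∀ q ∈ S, 0 ≤ orient p b q) :
    convexHull ℝ (insert p S) = convexHull ℝ S ∪ convexHull ℝ {a, b, p} := by
  apply Set.Subset.antisymm
  · rw [convexHull_insert ⟨a, ha⟩]
    intro z hz
    obtain ⟨_, hr, q, hq, μ, l, hμ, hl, hsum, rfl⟩ := mem_convexJoin.1 hz
    rw [Set.mem_singleton_iff.1 hr]
    clear hz hr
    have hqa : 0 ≤ orient a p q := convexHull_min hSa (convex_orient_nonneg _ _) hq
    have hqb : 0 ≤ orient p b q := convexHull_min hSb (convex_orient_nonneg _ _) hq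
    have hqc : 0 ≤ orient a b q := convexHull_min hS (convex_orient_nonneg _ _) hq
    have hcomb := orient_smul_eq a b p q
    have htot := orient_sum_eq a b p q
    rw [orient_swap p b q, orient_swap a p q] at hcomb htot
    set D := orient a b p
    set A := orient p b q
    set B := orient a p q
    set C := orient a b q
    have hq_eq : q = (A / -D) • a + (B / -D) • b + (C / D) • p := by
      have hD : D ≠ 0 := hp.ne
      have : q = D⁻¹ • (D • q) := by rw [smul_smul, inv_mul_cancel₀ hD, one_smul]
      rw [this, hcomb]
      match_scalars <;> field_simp
    have hA : 0 ≤ A / -D := div_nonneg hqb (by linarith)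
    have hB : 0 ≤ B / -D := div_nonneg hqa (by linarith)
    have hC : C / D ≤ 0 := div_nonpos_of_nonneg_of_nonpos hqc hp.le
    have hone : A / -D + B / -D + C / D = 1 := by
      have hD : D ≠ 0 := hp.ne
      field_simp
      linarith
    generalize A / -D = α at *
    generalize B / -D = β at *
    generalize C / D = γ at *
    by_cases hcase : 0 ≤ μ + l * γ
    · right
      have := convex_mem_of_three (convex_convexHull ℝ {a, b, p})
        (subset_convexHull ℝ _ (by simp : a ∈ ({a, b, p} : Set (ℝ × ℝ))))
        (subset_convexHull ℝ _ (by simp : b ∈ ({a, b, p} : Set (ℝ × ℝ))))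
        (subset_convexHull ℝ _ (by simp : p ∈ ({a, b, p} : Set (ℝ × ℝ))))
        (mul_nonneg hl hA) (mul_nonneg hl hB) hcase
        (by linear_combination l * hone + hsum)
      convert this using 1
      rw [hq_eq]
      module
    · left
      push Not at hcase
      have hγ : γ < 0 := by
        refine lt_of_le_of_ne hC fun h => ?_
        rw [h] at hcase
        linarith
      have hγ' := hγ.ne
      have hp_eq : p = (1 / γ) • q + (α / -γ) • a + (β / -γ) • b := by
        rw [hq_eq]
        match_scalars <;> field_simp <;> ring
      have := convex_mem_of_three (convex_convexHull ℝ S)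
        (subset_convexHull ℝ _ ha) (subset_convexHull ℝ _ hb) hq
        (α := μ * (α / -γ)) (β := μ * (β / -γ)) (γ := (μ + l * γ) / γ)
        (mul_nonneg hμ (div_nonneg hA (by linarith)))
        (mul_nonneg hμ (div_nonneg hB (by linarith)))
        (div_nonneg_of_nonpos hcase.le hγ.le)
        (by field_simp; linear_combination γ * hsum - μ * hone)
      convert this using 1
      clear hq_eq hcomb
      conv_lhs => rw [hp_eq]
      match_scalars <;> field_simp
  · apply Set.union_subset
    · exact convexHull_mono (Set.subset_insert _ _)
    · apply convexHull_mono
      rintro q (rfl | rfl | rfl)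
      · exact Set.mem_insert_of_mem _ ha
      · exact Set.mem_insert_of_mem _ hb
      · exact Set.mem_insert _ _

theorem volume_convexHull_insert {S : Set (ℝ × ℝ)} {a b p : ℝ × ℝ} (ha : a ∈ S)
    (hb : b ∈ S) (hp : orient a b p < 0) (hS : ∀ q ∈ S, 0 ≤ orient a b q)
    (hSa : ∀ q ∈ S, 0 ≤ orient a p q) (hSb : ∀ q ∈ S, 0 ≤ orient p b q) :
    volume (convexHull ℝ (insert p S)) =
      volume (convexHull ℝ S) + ENNReal.ofReal (-orient a b p / 2) := by
  have hab : a ≠ b := by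
    rintro rfl
    simp [orient] at hp
  have htri : convexHull ℝ {a, b, p} ⊆ {q | 0 ≤ orient b a q} := by
    apply convexHull_min _ (convex_orient_nonneg _ _)
    rintro q (rfl | rfl | rfl)
    · simp [orient, mul_comm]
    · simp [orient]
    · simp only [Set.mem_ofPred_eq, orient_swap a b]
      linarith
  have hdisj : AEDisjoint volume (convexHull ℝ S) (convexHull ℝ {a, b, p}) := by
    refine measure_mono_null ?_ (volume_line_eq_zero hab)
    rintro q ⟨hq, hq'⟩
    have h₁ : 0 ≤ orient a b q := convexHull_min hS (convex_orient_nonneg _ _) hq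
    have h₂ : 0 ≤ orient b a q := htri hq'
    rw [orient_swap a b] at h₂
    exact le_antisymm (by linarith) h₁
  have hmeas : MeasurableSet (convexHull ℝ {a, b, p}) :=
    ((Set.toFinite {a, b, p}).isCompact_convexHull ℝ).isClosed.measurableSet
  rw [convexHull_insert_eq_union_triangle ha hb hp hS hSa hSb,
    measure_union₀ hmeas.nullMeasurableSet hdisj, volume_triangle, abs_of_neg hp]

theorem volume_convexHull_clockwise (v : ℕ → ℝ × ℝ) (n : ℕ) (hn : 2 ≤ n)
    (hv : ∀ i j k, i < j → j < k → k ≤ n → orient (v i) (v j) (v k) < 0) :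
    volume (convexHull ℝ (v '' Set.Iic n)) =
      ENNReal.ofReal (∑ k ∈ Finset.range n, -orient (v 0) (v k) (v (k + 1)) / 2) := by
  induction n, hn using Nat.le_induction with
  | base =>
    have : v '' Set.Iic 2 = {v 0, v 1, v 2} := by
      have h : Set.Iic 2 = ({0, 1, 2} : Set ℕ) := by
        ext i
        simp only [Set.mem_Iic, Set.mem_insert_iff, Set.mem_singleton_iff]
        omega
      rw [h, Set.image_insert_eq, Set.image_pair]
    rw [this, volume_triangle, abs_of_neg (hv 0 1 2 one_pos one_lt_two le_rfl)]
    simp [Finset.sum_range_succ, orient]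
  | succ n hn ih =>
    have himage : v '' Set.Iic (n + 1) = insert (v (n + 1)) (v '' Set.Iic n) := by
      rw [← Set.image_insert_eq]
      congr 1
      ext i
      simp only [Set.mem_Iic, Set.mem_insert_iff]
      omega
    have hneg : ∀ k ≤ n, orient (v 0) (v k) (v (k + 1)) ≤ 0 := by
      intro k hk
      rcases Nat.eq_zero_or_pos k with rfl | hk'
      · simp [orient]
      · exact (hv 0 k (k + 1) hk' k.lt_succ_self (by omega)).le
    rw [himage, volume_convexHull_insert (a := v 0) (b := v n)
      (Set.mem_image_of_mem v (Set.mem_Iic.2 n.zero_le))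
      (Set.mem_image_of_mem v (Set.mem_Iic.2 le_rfl))
      (hv 0 n (n + 1) (by omega) n.lt_succ_self le_rfl),
      ih fun i j k hij hjk hk => hv i j k hij hjk (by omega), Finset.sum_range_succ,
      ENNReal.ofReal_add]
    · refine Finset.sum_nonneg fun k hk => ?_
      have := hneg k (Finset.mem_range.1 hk).le
      linarith
    · have := hneg n le_rfl
      linarith
    · rintro _ ⟨i, hi, rfl⟩
      rw [Set.mem_Iic] at hi
      rcases Nat.eq_zero_or_pos i with rfl | hi'
      · simp [orient]
      rcases hi.eq_or_lt with rfl | hi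
      · simp [orient, mul_comm]
      · have := hv 0 i n hi' hi (by omega)
        rw [orient_swap, ← orient_rotate] at this
        linarith
    · rintro _ ⟨i, hi, rfl⟩
      rw [Set.mem_Iic] at hi
      rcases Nat.eq_zero_or_pos i with rfl | hi'
      · simp [orient]
      · have := hv 0 i (n + 1) hi' (by omega) le_rfl
        rw [orient_swap, ← orient_rotate] at this
        linarith
    · rintro _ ⟨i, hi, rfl⟩
      rw [Set.mem_Iic] at hi
      rcases hi.eq_or_lt with rfl | hi
      · simp [orient, mul_comm]
      · have := hv i n (n + 1) hi n.lt_succ_self le_rfl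
        rw [← orient_rotate, orient_swap] at this
        linarith

theorem sum_orient_fan (v : ℕ → ℝ × ℝ) (n : ℕ) :
    ∑ k ∈ Finset.range n, orient (v 0) (v k) (v (k + 1)) =
      ∑ k ∈ Finset.range n, cross (v k) (v (k + 1)) + cross (v n) (v 0) := by
  induction n with
  | zero => simp [cross, mul_comm]
  | succ n ih =>
    rw [Finset.sum_range_succ, Finset.sum_range_succ, ih, orient_eq_cross]
    simp only [cross]
    ring

/-- The shoelace formula for clockwise convex polygons. -/
theorem volume_convexHull_range_clockwise {m : ℕ} [NeZero m] (hm : 3 ≤ m) (w : Fin m → ℝ × ℝ)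
    (hw : ∀ i j k, i < j → j < k → orient (w i) (w j) (w k) < 0) :
    (volume (convexHull ℝ (Set.range w))).toReal = -(∑ i, cross (w i) (w (i + 1))) / 2 := by
  obtain ⟨n, rfl⟩ : ∃ n, m = n + 1 := ⟨m - 1, by omega⟩
  let v : ℕ → ℝ × ℝ := fun i => w (Fin.ofNat (n + 1) i)
  have hv : ∀ i j k, i < j → j < k → k ≤ n → orient (v i) (v j) (v k) < 0 := by
    intro i j k hij hjk hk
    apply hw <;> rw [Fin.lt_def] <;> simp only [Fin.val_ofNat] <;>
      rw [Nat.mod_eq_of_lt (by omega), Nat.mod_eq_of_lt (by omega)] <;> assumption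
  have hrange : Set.range w = v '' Set.Iic n := by
    ext p
    constructor
    · rintro ⟨i, rfl⟩
      exact ⟨i, Nat.lt_succ_iff.1 i.2, by simp [v]⟩
    · rintro ⟨i, -, rfl⟩
      exact ⟨_, rfl⟩
  have hcross : ∑ i, cross (w i) (w (i + 1)) =
      ∑ k ∈ Finset.range n, orient (v 0) (v k) (v (k + 1)) := by
    have hsum := Fin.sum_univ_eq_sum_range (fun k => cross (v k) (v (k + 1))) (n + 1)
    have hlast : v (n + 1) = v 0 := by
      simp only [v]
      congr 1
      ext
      simp
    rw [Finset.sum_range_succ, hlast] at hsum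
    rw [sum_orient_fan, ← hsum]
    refine Finset.sum_congr rfl fun i _ => ?_
    have h₁ : Fin.ofNat (n + 1) i = i := by simp
    have h₂ : Fin.ofNat (n + 1) (i + 1) = i + 1 := by
      ext
      simp [Fin.val_add]
    simp only [v, h₁, h₂]
  have hnonneg : 0 ≤ ∑ k ∈ Finset.range n, -orient (v 0) (v k) (v (k + 1)) / 2 := by
    refine Finset.sum_nonneg fun k hk => ?_
    rcases Nat.eq_zero_or_pos k with rfl | hk'
    · simp [orient]
    · have := hv 0 k (k + 1) hk' k.lt_succ_self (Finset.mem_range.1 hk)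
      linarith
  rw [hrange, volume_convexHull_clockwise v n (by omega) hv, ENNReal.toReal_ofReal hnonneg,
    hcross, ← Finset.sum_div, Finset.sum_neg_distrib]

end PlanarPolygon

/-- For lines `L_i : y = t_i·x + s_i` (i cyclic mod m, m ≥ 3) with
`t_i ≠ t_{i+1}`, let `w_i` be the intersection point of `L_i` and `L_{i+1}`, with
x-coordinate `x_i`, and `f_{i,i+1}(x) = ((t_i − t_{i+1})/2)x² + (s_i − s_{i+1})x`.
If the `w_i` are pairwise distinct and in strictly convex position in clockwise order,
then the area of the polygon (the Lebesgue measure of the convex hull of the `w_i`)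
equals `Σ_{i=1}^m f_{i,i+1}(x_i)`. -/
theorem cc_polygon_area (m : ℕ) (hm : 3 ≤ m) [NeZero m]
    (t s : Fin m → ℝ) (ht : ∀ i : Fin m, t i ≠ t (i + 1)) :
    let x : Fin m → ℝ := fun i => (s (i + 1) - s i) / (t i - t (i + 1))
    let w : Fin m → ℝ × ℝ := fun i => (x i, t i * x i + s i)
    (∀ i j : Fin m, i ≠ j → w i ≠ w j) →
    (∀ i j k : Fin m, i < j → j < k →
      (w j - w i).1 * (w k - w i).2 - (w j - w i).2 * (w k - w i).1 < 0) →
    (volume (convexHull ℝ (Set.range w))).toReal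
      = ∑ i : Fin m, ((t i - t (i + 1)) / 2 * (x i) ^ 2 + (s i - s (i + 1)) * x i) := by
  intro x w _ hw
  have hline : ∀ i, w i = (x i, t (i + 1) * x i + s (i + 1)) := by
    intro i
    have hx : x i * (t i - t (i + 1)) = s (i + 1) - s i :=
      div_mul_cancel₀ _ (sub_ne_zero.2 (ht i))
    ext
    · rfl
    · change t i * x i + s i = t (i + 1) * x i + s (i + 1)
      linear_combination hx
  have hcross : ∀ i, PlanarPolygon.cross (w i) (w (i + 1)) =
      s (i + 1) * x i - s (i + 1) * x (i + 1) := by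
    intro i
    rw [hline i]
    simp only [PlanarPolygon.cross, w]
    ring
  have hterm : ∀ i, (t i - t (i + 1)) / 2 * (x i) ^ 2 + (s i - s (i + 1)) * x i =
      (s i * x i - s (i + 1) * x i) / 2 := by
    intro i
    have hx : x i * (t i - t (i + 1)) = s (i + 1) - s i :=
      div_mul_cancel₀ _ (sub_ne_zero.2 (ht i))
    linear_combination x i / 2 * hx
  have hshift : ∑ i, s (i + 1) * x (i + 1) = ∑ i, s i * x i :=
    Equiv.sum_comp (Equiv.addRight (1 : Fin m)) fun i => s i * x i
  rw [PlanarPolygon.volume_convexHull_range_clockwise hm w hw, Finset.sum_congr rfl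
    fun i _ => hcross i, Finset.sum_congr rfl fun i _ => hterm i, ← Finset.sum_div,
    Finset.sum_sub_distrib, Finset.sum_sub_distrib, hshift, neg_sub]
end
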